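/- arXiv:1510.03044 — 4 statements merged into one kernel-verified Lean document; each statement's English description precedes it below -/
import Mathlib

section
/- Let n ≥ 2. Let Y_c and L be real symmetric n×n weighted graph Laplacians (nonpositive off-diagonal entries, zero row sums), each of rank n−1 (connected), let Y_s be diagonal with nonnegative entries and Y = Y_s + Y_c; if Y_s ≠ 0 assume additionally Y⁻¹ is entrywise nonnegative. Let D = diag(τ_1,…,τ_n) with τ_i > 0, R = diag(R_1,…,R_n) with R_i > 0, Υ = diag(I_1^max,…,I_n^max) with I_i^max > 0, Ψ = diag(β_1,…,β_n) with β_i > 0, and Φ = diag(α_1,…,α_n) with α_i ≥ 0. Suppose there exist positive scalars ū and r̄ such that R_i·I_i^max = ū and α_i = r̄·β_i for all i, a positive scalar ν₁ such that the symmetric matrix Υ + ū·Y − ν₁·(YΨL + LΨY)/2 is positive semidefinite, and a θ ≥ 0 admissible for YΨL such that (ν₁ + r̄)·θ² + r̄ > max_i τ_i. Then the closed-loop matrix A_c is semistable. -/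
open Matrix Filter Topology

/-- A real square matrix `A` is semistable if `exp(tA)x₀` converges as `t → ∞` for every
initial vector `x₀`. -/
def IsSemistable {N : Type*} [Fintype N] [DecidableEq N]
    (A : Matrix N N ℝ) : Prop :=
  ∀ x₀ : N → ℝ, ∃ y : N → ℝ,
    Tendsto (fun t : ℝ => NormedSpace.exp (t • A) *ᵥ x₀) atTop (𝓝 y)

/-- `θ ≥ 0` is admissible for a real square matrix `M` (with symmetric part `M_s` and
skew-symmetric part `M_k`) if both block matrices `[[M_s, ±θM_k],[±θM_kᵀ, M_s]]` are
positive semidefinite. -/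
def IsAdmissible {n : ℕ} (θ : ℝ) (M : Matrix (Fin n) (Fin n) ℝ) : Prop :=
  0 ≤ θ ∧
  (Matrix.fromBlocks ((1 / 2 : ℝ) • (M + Mᵀ)) (θ • ((1 / 2 : ℝ) • (M - Mᵀ)))
      (θ • ((1 / 2 : ℝ) • (M - Mᵀ))ᵀ) ((1 / 2 : ℝ) • (M + Mᵀ))).PosSemidef ∧
  (Matrix.fromBlocks ((1 / 2 : ℝ) • (M + Mᵀ)) ((-θ) • ((1 / 2 : ℝ) • (M - Mᵀ)))
      ((-θ) • ((1 / 2 : ℝ) • (M - Mᵀ))ᵀ) ((1 / 2 : ℝ) • (M + Mᵀ))).PosSemidef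

section Aux
variable {N : Type*} [Fintype N] [DecidableEq N]

open scoped Matrix.Norms.Operator in
lemma exp_mulVec_hasSum (B : Matrix N N ℂ) (x : N → ℂ) :
    HasSum (fun k : ℕ => ((k.factorial : ℂ)⁻¹) • (B ^ k *ᵥ x)) (NormedSpace.exp B *ᵥ x) := by
  have h := NormedSpace.exp_series_hasSum_exp' (𝕂 := ℂ) B
  have h2 := h.map (⟨⟨fun M => M *ᵥ x, zero_mulVec x⟩, fun M M' => add_mulVec M M' x⟩ : Matrix N N ℂ →+ (N → ℂ))
    (by
      change Continuous fun M : Matrix N N ℂ => M *ᵥ x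
      fun_prop)
  have e : (fun k : ℕ => ((k.factorial : ℂ)⁻¹) • (B ^ k *ᵥ x)) =
      fun k : ℕ => (((k.factorial : ℂ)⁻¹) • B ^ k) *ᵥ x := by
    funext k
    rw [smul_mulVec]
  rw [e]
  exact h2

open scoped Matrix.Norms.Operator in
lemma exp_map_complex (A : Matrix N N ℝ) :
    (NormedSpace.exp A).map (algebraMap ℝ ℂ) = NormedSpace.exp (A.map (algebraMap ℝ ℂ)) := by
  have := NormedSpace.map_exp (RingHom.mapMatrix (m := N) (algebraMap ℝ ℂ))
    (by
      change Continuous fun M : Matrix N N ℝ => M.map (algebraMap ℝ ℂ)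
      exact Continuous.matrix_map continuous_id (continuous_algebraMap ℝ ℂ)) A
  exact this

lemma exp_genEig (B : Matrix N N ℂ) (μ : ℂ) (k : ℕ) (x : N → ℂ)
    (hx : (B - μ • 1) ^ k *ᵥ x = 0) (t : ℝ) :
    NormedSpace.exp ((t : ℂ) • B) *ᵥ x =
      ∑ j ∈ Finset.range k, (Complex.exp (t * μ) * (t : ℂ) ^ j) •
        (((j.factorial : ℂ)⁻¹) • ((B - μ • 1) ^ j *ᵥ x)) := by
  have e : (t : ℂ) • B = diagonal (fun _ => (t * μ : ℂ)) + (t : ℂ) • (B - μ • 1) := by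
    rw [← smul_one_eq_diagonal, smul_sub, smul_smul]; abel
  have hc : Commute (diagonal (fun _ : N => (t * μ : ℂ))) ((t : ℂ) • (B - μ • 1)) := by
    rw [← smul_one_eq_diagonal]
    exact (Commute.one_left _).smul_left _
  rw [e, Matrix.exp_add_of_commute _ _ hc, ← mulVec_mulVec]
  have h1 := exp_mulVec_hasSum ((t : ℂ) • (B - μ • 1)) x
  have h2 : HasSum (fun j : ℕ => ((j.factorial : ℂ)⁻¹) • (((t : ℂ) • (B - μ • 1)) ^ j *ᵥ x))
      (∑ j ∈ Finset.range k, ((j.factorial : ℂ)⁻¹) • (((t : ℂ) • (B - μ • 1)) ^ j *ᵥ x)) := by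
    apply hasSum_sum_of_ne_finset_zero
    intro j hj
    have hj : k ≤ j := by simpa using hj
    obtain ⟨i, rfl⟩ := Nat.exists_eq_add_of_le' hj
    rw [smul_pow, smul_mulVec, pow_add (B - μ • 1), ← mulVec_mulVec, hx]; simp
  rw [h1.unique h2, Matrix.exp_diagonal, Matrix.mulVec_sum]
  refine Finset.sum_congr rfl fun j _ => ?_
  rw [smul_pow, smul_mulVec]
  have : (NormedSpace.exp fun _ : N => (t * μ : ℂ)) = fun _ => Complex.exp (t * μ) := by
    funext i
    rw [Pi.coe_exp, Complex.exp_eq_exp_ℂ]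
  rw [this, ← smul_one_eq_diagonal, smul_mulVec, one_mulVec, smul_comm ((j.factorial : ℂ)⁻¹), smul_smul]

lemma tendsto_exp_pow (μ : ℂ) (hμ : μ.re < 0) (j : ℕ) :
    Tendsto (fun t : ℝ => Complex.exp (t * μ) * (t : ℂ) ^ j) atTop (𝓝 0) := by
  rw [tendsto_zero_iff_norm_tendsto_zero]
  have h := Real.tendsto_pow_mul_exp_neg_atTop_nhds_zero j
  have h2 : Tendsto (fun t : ℝ => t * (-μ.re)) atTop atTop :=
    tendsto_id.atTop_mul_const (by linarith)
  have h3 := (h.comp h2).const_mul (((-μ.re) ^ j)⁻¹)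
  rw [mul_zero] at h3
  refine h3.congr' ?_
  filter_upwards [eventually_ge_atTop 0] with t ht
  have : (-μ.re) ^ j ≠ 0 := pow_ne_zero _ (by linarith)
  simp only [Function.comp, norm_mul, norm_pow, Complex.norm_exp, Complex.norm_real]
  rw [Real.norm_of_nonneg ht, mul_pow]
  simp
  field_simp

lemma semistable_of_spec (A : Matrix N N ℝ)
    (h0 : ∀ x, A *ᵥ (A *ᵥ x) = 0 → A *ᵥ x = 0)
    (h1 : ∀ μ : ℂ, μ ≠ 0 → ∀ z : N → ℂ, z ≠ 0 → A.map (algebraMap ℝ ℂ) *ᵥ z = μ • z →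
      μ.re < 0) : IsSemistable A := by
  set B := A.map (algebraMap ℝ ℂ) with hB
  have hre : ∀ z : N → ℂ, (fun i => ((B *ᵥ z) i).re) = A *ᵥ (fun i => (z i).re) := by
    intro z; funext i; simp [hB, mulVec, dotProduct]
  have him : ∀ z : N → ℂ, (fun i => ((B *ᵥ z) i).im) = A *ᵥ (fun i => (z i).im) := by
    intro z; funext i; simp [hB, mulVec, dotProduct]
  have h0' : ∀ z : N → ℂ, B *ᵥ (B *ᵥ z) = 0 → B *ᵥ z = 0 := by
    intro z hz
    have e1 := h0 (fun i => (z i).re) (by rw [← hre, ← hre, hz]; rfl)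
    have e2 := h0 (fun i => (z i).im) (by rw [← him, ← him, hz]; rfl)
    rw [← hre] at e1
    rw [← him] at e2
    funext i
    exact Complex.ext (congrFun e1 i) (congrFun e2 i)
  have h0k : ∀ k (z : N → ℂ), B ^ k *ᵥ z = 0 → B *ᵥ z = 0 := by
    intro k
    induction k with
    | zero => intro z hz; simp at hz; simp [hz]
    | succ k ih =>
      intro z hz
      rw [pow_succ, ← mulVec_mulVec] at hz
      exact h0' z (ih _ hz)
  let S : Submodule ℂ (N → ℂ) :=
    { carrier := {x | ∃ y, Tendsto (fun t : ℝ => NormedSpace.exp ((t : ℂ) • B) *ᵥ x) atTop (𝓝 y)}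
      add_mem' := by
        rintro a b ⟨y, hy⟩ ⟨y', hy'⟩
        exact ⟨y + y', by simpa only [mulVec_add] using hy.add hy'⟩
      zero_mem' := ⟨0, by simp⟩
      smul_mem' := by
        rintro c x ⟨y, hy⟩
        exact ⟨c • y, by simpa only [mulVec_smul] using hy.const_smul c⟩ }
  have hS : S = ⊤ := by
    rw [eq_top_iff, ← Module.End.iSup_maxGenEigenspace_eq_top (Matrix.toLin' B)]
    refine iSup_le fun μ => ?_
    intro x hx
    obtain ⟨k, hk⟩ := (Module.End.mem_maxGenEigenspace _ _ _).1 hx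
    have hk' : (B - μ • 1) ^ k *ᵥ x = 0 := by
      have : (toLin' B - μ • 1) ^ k = toLin' ((B - μ • 1) ^ k) := by
        rw [toLin'_pow]; simp [Module.End.one_eq_id]
      rw [this, toLin'_apply] at hk
      exact hk
    by_cases hx0 : x = 0
    · rw [hx0]; exact S.zero_mem
    by_cases hμ : μ = 0
    · subst hμ
      have hBx : (B - (0 : ℂ) • 1) ^ 1 *ᵥ x = 0 := by
        have := h0k k x (by simpa using hk')
        simpa using this
      refine ⟨x, ?_⟩
      simp_rw [exp_genEig B 0 1 x hBx]
      simp
    · have hev : Module.End.HasEigenvalue (toLin' B) μ := by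
        apply Module.End.hasEigenvalue_of_hasGenEigenvalue (k := k)
        intro hbot
        apply hx0
        have : x ∈ Module.End.genEigenspace (toLin' B) μ k := by
          rw [Module.End.mem_genEigenspace_nat]; exact hk
        rw [hbot] at this
        simpa using this
      obtain ⟨z, hz⟩ := hev.exists_hasEigenvector
      have hneg := h1 μ hμ z hz.2 (by simpa using hz.apply_eq_smul)
      refine ⟨0, ?_⟩
      simp_rw [exp_genEig B μ k x hk']
      rw [show (0 : N → ℂ) = ∑ j ∈ Finset.range k, (0 : ℂ) • (((j.factorial : ℂ)⁻¹) • ((B - μ • 1) ^ j *ᵥ x)) by simp]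
      exact tendsto_finsetSum _ fun j _ => (tendsto_exp_pow μ hneg j).smul_const _
  intro x
  have hxS : (fun i => (x i : ℂ)) ∈ S := by rw [hS]; trivial
  obtain ⟨y, hy⟩ := hxS
  refine ⟨fun i => (y i).re, ?_⟩
  rw [tendsto_pi_nhds] at hy ⊢
  intro i
  have := (Complex.continuous_re.tendsto _).comp (hy i)
  refine this.congr fun t => ?_
  have e : (t : ℂ) • B = (t • A).map (algebraMap ℝ ℂ) := by
    ext i j; simp [hB]
  simp only [Function.comp]
  rw [e, ← exp_map_complex]
  simp [mulVec, dotProduct]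
end Aux

section Aux2

lemma scalar_stable (a b p q r ν θ T U s ω : ℝ) (ha : 0 < a) (hU : 0 < U) (hb : U ≤ b)
    (haT : a ≤ T * U) (hr : 0 < r) (hν : 0 < ν) (hbp : ν * p ≤ b)
    (h1 : 0 ≤ p + θ * q) (h2 : 0 ≤ p - θ * q) (hT : T < (ν + r) * θ ^ 2 + r)
    (hs : 0 ≤ s)
    (ere : a * (s ^ 2 - ω ^ 2) + s * (b + r * p) - ω * (r * q) + p = 0)
    (eim : 2 * a * s * ω + ω * (b + r * p) + s * (r * q) + q = 0) : s = 0 ∧ ω = 0 := by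
  have hp : 0 ≤ p := by linarith
  have hpq : θ ^ 2 * q ^ 2 ≤ p ^ 2 := by nlinarith [mul_nonneg h1 h2]
  obtain ⟨A, hA⟩ : ∃ A, A = b + r * p := ⟨_, rfl⟩
  rw [← hA] at ere eim
  have hrp : 0 ≤ r * p := by positivity
  have hAb : b ≤ A := by linarith
  have hA0 : 0 < A := by linarith
  by_cases hq : q = 0
  · subst hq
    have hω : ω = 0 := by
      have : ω * (2 * a * s + A) = 0 := by linarith
      rcases mul_eq_zero.1 this with h | h
      · exact h
      · have : 0 ≤ a * s := by positivity
        linarith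
    subst hω
    refine ⟨?_, rfl⟩
    have h3 : 0 ≤ a * s ^ 2 := by positivity
    have h4 : 0 ≤ s * A := by positivity
    have : s * A = 0 := by nlinarith
    rcases mul_eq_zero.1 this with h | h
    · exact h
    · linarith
  · exfalso
    have hq2 : 0 < q ^ 2 := by positivity
    -- key inequality
    have key : a * q ^ 2 < p * A ^ 2 + r * A * q ^ 2 := by
      have k1 : (ν + r) * p ≤ A := by linarith
      have k2 : (ν + r) * (θ ^ 2 * q ^ 2) ≤ p * A := by
        calc (ν + r) * (θ ^ 2 * q ^ 2) ≤ (ν + r) * p ^ 2 := by gcongr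
          _ = p * ((ν + r) * p) := by ring
          _ ≤ p * A := by gcongr
      have k3 : T * q ^ 2 < p * A + r * q ^ 2 := by
        calc T * q ^ 2 < ((ν + r) * θ ^ 2 + r) * q ^ 2 := by gcongr
          _ = (ν + r) * (θ ^ 2 * q ^ 2) + r * q ^ 2 := by ring
          _ ≤ _ := by linarith
      have hUA : U ≤ A := by linarith
      have k4 : 0 ≤ p * A + r * q ^ 2 := by positivity
      calc a * q ^ 2 ≤ T * U * q ^ 2 := by gcongr
        _ = U * (T * q ^ 2) := by ring
        _ < U * (p * A + r * q ^ 2) := by gcongr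
        _ ≤ A * (p * A + r * q ^ 2) := by gcongr
        _ = _ := by ring
    have hTT : ω * (2 * a * s + A) = - q * (1 + s * r) := by linarith
    have main : (a * s ^ 2 + s * A + p) * (2 * a * s + A) ^ 2
        + q ^ 2 * (1 + s * r) * (a * s * r + r * A - a) = 0 := by
      have e1 : (a * s ^ 2 + s * A + p) * (2 * a * s + A) ^ 2
        - a * (ω * (2 * a * s + A)) ^ 2 - (ω * (2 * a * s + A)) * (r * q) * (2 * a * s + A) = 0 := by
        linear_combination (2 * a * s + A) ^ 2 * ere
      rw [hTT] at e1
      linear_combination e1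
    have m1 : p * A ^ 2 ≤ (a * s ^ 2 + s * A + p) * (2 * a * s + A) ^ 2 := by
      have : A ≤ 2 * a * s + A := by
        have : 0 ≤ a * s := by positivity
        linarith
      have h3 : p ≤ a * s ^ 2 + s * A + p := by
        have : 0 ≤ a * s ^ 2 + s * A := by positivity
        linarith
      gcongr
    have m2 : r * A - a ≤ (1 + s * r) * (a * s * r + r * A - a) := by
      have : 0 ≤ s * r * (r * A) + a * s ^ 2 * r ^ 2 := by positivity
      nlinarith
    have m3 : q ^ 2 * (r * A - a) ≤ q ^ 2 * ((1 + s * r) * (a * s * r + r * A - a)) := by gcongr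
    nlinarith

lemma blocks_action {n : ℕ} {K : Type*} [Field K] (D Di Y R L Ui Ψ Φ : Matrix (Fin n) (Fin n) K)
    (hD : D * Di = 1) (r u : K) (hR : R = u • Ui) (hΦ : Φ = r • Ψ) (ι v p q : Fin n → K)
    (h : Matrix.fromBlocks (-(Di * (1 + Y * R))) (Di * Y)
      (-(Ψ * L * Ui) + Φ * L * Ui * Di * (1 + Y * R)) (-(Φ * L * Ui * Di * Y)) *ᵥ Sum.elim ι v
        = Sum.elim p q) :
    D *ᵥ p = -ι - u • (Y *ᵥ (Ui *ᵥ ι)) + Y *ᵥ v ∧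
    q = -((Ψ * L) *ᵥ (Ui *ᵥ ι)) - r • ((Ψ * L) *ᵥ (Ui *ᵥ p)) := by
  rw [fromBlocks_mulVec] at h
  have hp : p = -(Di * (1 + Y * R)) *ᵥ ι + (Di * Y) *ᵥ v := by
    funext i; have := congrFun h (Sum.inl i); simpa using this.symm
  have hq : q = (-(Ψ * L * Ui) + Φ * L * Ui * Di * (1 + Y * R)) *ᵥ ι
      + (-(Φ * L * Ui * Di * Y)) *ᵥ v := by
    funext i; have := congrFun h (Sum.inr i); simpa using this.symm
  constructor
  · rw [hp, mulVec_add, mulVec_mulVec, mulVec_mulVec, mul_neg, ← mul_assoc, ← mul_assoc, hD, hR]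
    simp only [one_mul, neg_mulVec, add_mulVec, one_mulVec, mul_smul_comm, smul_mulVec,
      mulVec_mulVec]
    abel
  · rw [hq, hp, hΦ]
    simp only [mulVec_add, mulVec_mulVec, add_mulVec, neg_mulVec, mulVec_neg, smul_mul_assoc,
      smul_mulVec, mul_assoc, smul_add, smul_neg]
    abel

lemma lap_nonneg {n : ℕ} (Y : Matrix (Fin n) (Fin n) ℝ) (hs : Y.IsSymm)
    (hoff : ∀ i j, i ≠ j → Y i j ≤ 0) (hrow : ∀ i, ∑ j, Y i j = 0) (x : Fin n → ℝ) :
    0 ≤ x ⬝ᵥ (Y *ᵥ x) := by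
  have hcol : ∀ j, ∑ i, Y i j = 0 := fun j => by
    rw [← hrow j]; exact Finset.sum_congr rfl fun i _ => hs.apply j i
  have e : ∑ i, ∑ j, Y i j * (x i - x j) ^ 2 = -2 * (x ⬝ᵥ (Y *ᵥ x)) := by
    have e1 : ∀ i j, Y i j * (x i - x j) ^ 2 =
      Y i j * x i ^ 2 + Y i j * x j ^ 2 + -2 * (x i * (Y i j * x j)) := fun i j => by ring
    simp_rw [e1, Finset.sum_add_distrib]
    rw [Finset.sum_comm (f := fun i j => Y i j * x j ^ 2)]
    simp_rw [← Finset.sum_mul, hrow, hcol, ← Finset.mul_sum]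
    simp [dotProduct, mulVec]
  have : ∑ i, ∑ j, Y i j * (x i - x j) ^ 2 ≤ 0 := by
    refine Finset.sum_nonpos fun i _ => Finset.sum_nonpos fun j _ => ?_
    by_cases h : i = j
    · simp [h]
    · exact mul_nonpos_of_nonpos_of_nonneg (hoff i j h) (sq_nonneg _)
  linarith

lemma ker_const {n : ℕ} (hn : 2 ≤ n) (L : Matrix (Fin n) (Fin n) ℝ)
    (hrow : ∀ i, ∑ j, L i j = 0) (hrank : L.rank = n - 1) (x : Fin n → ℝ)
    (hx : L *ᵥ x = 0) : ∃ c : ℝ, x = fun _ => c := by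
  have hone : L *ᵥ (fun _ => (1 : ℝ)) = 0 := by
    funext i; simpa [mulVec, dotProduct] using hrow i
  have hrn := LinearMap.finrank_range_add_finrank_ker L.mulVecLin
  have hr : Module.finrank ℝ (LinearMap.range L.mulVecLin) = n - 1 := hrank
  rw [hr, Module.finrank_fin_fun] at hrn
  have hk : Module.finrank ℝ (LinearMap.ker L.mulVecLin) = 1 := by omega
  have h0 : (⟨fun _ => (1 : ℝ), hone⟩ : LinearMap.ker L.mulVecLin) ≠ 0 := by
    intro h
    have := congrFun (congrArg Subtype.val h) ⟨0, by omega⟩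
    simp at this
  obtain ⟨c, hc⟩ := (finrank_eq_one_iff_of_nonzero' _ h0).1 hk ⟨x, hx⟩
  refine ⟨c, ?_⟩
  have := congrArg Subtype.val hc
  simp at this
  rw [← this]; funext i; simp

lemma cplx_form {n : ℕ} (S : Matrix (Fin n) (Fin n) ℝ) (w : Fin n → ℂ) :
    star w ⬝ᵥ (S.map (algebraMap ℝ ℂ) *ᵥ w) =
     ⟨(fun i => (w i).re) ⬝ᵥ (S *ᵥ fun i => (w i).re) + (fun i => (w i).im) ⬝ᵥ (S *ᵥ fun i => (w i).im),
      (fun i => (w i).re) ⬝ᵥ (S *ᵥ fun i => (w i).im) - (fun i => (w i).im) ⬝ᵥ (S *ᵥ fun i => (w i).re)⟩ := by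
  apply Complex.ext
  · simp [dotProduct, mulVec, Finset.sum_add_distrib]
  · simp [dotProduct, mulVec, Finset.sum_add_distrib, sub_eq_add_neg]

end Aux2

/-- Sufficient condition c1) for semistability of the closed-loop matrix
`A_c` of the distributed cooperative droop control. -/
theorem closedLoop_semistable_c1
    (n : ℕ) (hn : 2 ≤ n)
    (Yc L : Matrix (Fin n) (Fin n) ℝ)
    (hYcsym : Yc.IsSymm) (hLsym : L.IsSymm)
    (hYcoff : ∀ i j, i ≠ j → Yc i j ≤ 0) (hLoff : ∀ i j, i ≠ j → L i j ≤ 0)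
    (hYcrow : ∀ i, ∑ j, Yc i j = 0) (hLrow : ∀ i, ∑ j, L i j = 0)
    (hYcrank : Yc.rank = n - 1) (hLrank : L.rank = n - 1)
    (G : Fin n → ℝ) (hG : ∀ i, 0 ≤ G i)
    (Ys : Matrix (Fin n) (Fin n) ℝ) (hYs : Ys = Matrix.diagonal G)
    (Y : Matrix (Fin n) (Fin n) ℝ) (hY : Y = Ys + Yc)
    (hYinvnn : Ys ≠ 0 → ∀ i j, 0 ≤ Y⁻¹ i j)
    (τ Rv Imax β α : Fin n → ℝ)
    (hτ : ∀ i, 0 < τ i) (hRv : ∀ i, 0 < Rv i) (hImax : ∀ i, 0 < Imax i)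
    (hβ : ∀ i, 0 < β i) (hα : ∀ i, 0 ≤ α i)
    (D R Υ Ψ Φ : Matrix (Fin n) (Fin n) ℝ)
    (hD : D = Matrix.diagonal τ) (hR : R = Matrix.diagonal Rv)
    (hΥ : Υ = Matrix.diagonal Imax) (hΨ : Ψ = Matrix.diagonal β)
    (hΦ : Φ = Matrix.diagonal α)
    (ubar rbar : ℝ) (hubar : 0 < ubar) (hrbar : 0 < rbar)
    (hRI : ∀ i, Rv i * Imax i = ubar) (hαβ : ∀ i, α i = rbar * β i)
    (ν₁ : ℝ) (hν₁ : 0 < ν₁)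
    (hpsd : (Υ + ubar • Y
      - ν₁ • ((1 / 2 : ℝ) • (Y * Ψ * L + L * Ψ * Y))).PosSemidef)
    (θ : ℝ) (hθ : IsAdmissible θ (Y * Ψ * L))
    (hgain : (ν₁ + rbar) * θ ^ 2 + rbar >
      Finset.univ.sup' ⟨⟨0, by omega⟩, Finset.mem_univ _⟩ τ)
    (A_c : Matrix (Fin n ⊕ Fin n) (Fin n ⊕ Fin n) ℝ)
    (hA : A_c = Matrix.fromBlocks
      (-(D⁻¹ * (1 + Y * R))) (D⁻¹ * Y)
      (-(Ψ * L * Υ⁻¹) + Φ * L * Υ⁻¹ * D⁻¹ * (1 + Y * R)) (-(Φ * L * Υ⁻¹ * D⁻¹ * Y))) :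
    IsSemistable A_c := by
  have hτ0 : ∀ i, τ i ≠ 0 := fun i => (hτ i).ne'
  have hI0 : ∀ i, Imax i ≠ 0 := fun i => (hImax i).ne'
  have hDi : D * D⁻¹ = 1 := by
    apply Matrix.mul_nonsing_inv
    rw [hD, det_diagonal]
    exact (Finset.prod_ne_zero_iff.2 fun i _ => hτ0 i).isUnit
  have hUi : Υ * Υ⁻¹ = 1 := by
    apply Matrix.mul_nonsing_inv
    rw [hΥ, det_diagonal]
    exact (Finset.prod_ne_zero_iff.2 fun i _ => hI0 i).isUnit
  have hRU : R = ubar • Υ⁻¹ := by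
    have h1 : R * Υ = ubar • (1 : Matrix (Fin n) (Fin n) ℝ) := by
      rw [hR, hΥ, diagonal_mul_diagonal, smul_one_eq_diagonal]
      congr 1; funext i; exact hRI i
    calc R = R * (Υ * Υ⁻¹) := by rw [hUi, mul_one]
      _ = _ := by rw [← mul_assoc, h1, smul_mul_assoc, one_mul]
  have hΦΨ : Φ = rbar • Ψ := by
    rw [hΦ, hΨ, ← diagonal_smul]; congr 1; funext i; exact hαβ i
  have hYsym : Y.IsSymm := by
    rw [hY, hYs]; exact (isSymm_diagonal G).add hYcsym
  have hYform : ∀ x : Fin n → ℝ, x ⬝ᵥ (Y *ᵥ x) = ∑ i, G i * x i ^ 2 + x ⬝ᵥ (Yc *ᵥ x) := by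
    intro x
    rw [hY, hYs, add_mulVec, dotProduct_add]
    congr 1
    simp only [dotProduct, mulVec_diagonal]
    exact Finset.sum_congr rfl fun i _ => by ring
  have hYcnn := lap_nonneg Yc hYcsym hYcoff hYcrow
  have hYnn : ∀ x : Fin n → ℝ, 0 ≤ x ⬝ᵥ (Y *ᵥ x) := by
    intro x
    rw [hYform]
    exact add_nonneg (Finset.sum_nonneg fun i _ => mul_nonneg (hG i) (sq_nonneg _)) (hYcnn x)
  have hn0 : (⟨0, by omega⟩ : Fin n) ∈ Finset.univ := Finset.mem_univ _
  have hLcol : ∀ x : Fin n → ℝ, ∑ i, (L *ᵥ x) i = 0 := by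
    intro x
    simp only [mulVec, dotProduct]
    rw [Finset.sum_comm]
    refine Finset.sum_eq_zero fun j _ => ?_
    rw [← Finset.sum_mul]
    have : ∑ i, L i j = 0 := by
      rw [← hLrow j]; exact Finset.sum_congr rfl fun i _ => hLsym.apply j i
    rw [this, zero_mul]
  have hYccol : ∀ x : Fin n → ℝ, ∑ i, (Yc *ᵥ x) i = 0 := by
    intro x
    simp only [mulVec, dotProduct]
    rw [Finset.sum_comm]
    refine Finset.sum_eq_zero fun j _ => ?_
    rw [← Finset.sum_mul]
    have : ∑ i, Yc i j = 0 := by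
      rw [← hYcrow j]; exact Finset.sum_congr rfl fun i _ => hYcsym.apply j i
    rw [this, zero_mul]
  have hne : (Finset.univ : Finset (Fin n)).Nonempty := ⟨_, hn0⟩
  subst hA
  apply semistable_of_spec
  · -- semisimplicity of the zero eigenvalue
    intro z hz
    obtain ⟨p, q, hpq⟩ : ∃ p q : Fin n → ℝ, Matrix.fromBlocks
      (-(D⁻¹ * (1 + Y * R))) (D⁻¹ * Y)
      (-(Ψ * L * Υ⁻¹) + Φ * L * Υ⁻¹ * D⁻¹ * (1 + Y * R)) (-(Φ * L * Υ⁻¹ * D⁻¹ * Y)) *ᵥ z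
        = Sum.elim p q := ⟨_, _, (Sum.elim_comp_inl_inr _).symm⟩
    rw [hpq] at hz ⊢
    have hz' := hz.trans (show (0 : Fin n ⊕ Fin n → ℝ) = Sum.elim (0 : Fin n → ℝ) (0 : Fin n → ℝ) by
      funext i; cases i <;> rfl)
    rw [← Sum.elim_comp_inl_inr z] at hpq
    obtain ⟨-, e2⟩ := blocks_action D D⁻¹ Y R L Υ⁻¹ Ψ Φ hDi rbar ubar hRU hΦΨ _ _ _ _ hpq
    obtain ⟨f1, f2⟩ := blocks_action D D⁻¹ Y R L Υ⁻¹ Ψ Φ hDi rbar ubar hRU hΦΨ _ _ _ _ hz'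
    simp only [mulVec_zero, smul_zero, sub_zero] at f1 f2
    have hΨL0 : (Ψ * L) *ᵥ (Υ⁻¹ *ᵥ p) = 0 := by
      rw [eq_comm, neg_eq_zero] at f2; exact f2
    have hLw : L *ᵥ (Υ⁻¹ *ᵥ p) = 0 := by
      rw [← mulVec_mulVec, hΨ] at hΨL0
      funext i
      have := congrFun hΨL0 i
      rw [mulVec_diagonal] at this
      exact (mul_eq_zero.1 this).resolve_left (hβ i).ne'
    obtain ⟨c, hc⟩ := ker_const hn L hLrow hLrank _ hLw
    have hp : p = fun i => c * Imax i := by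
      have : p = Υ *ᵥ (Υ⁻¹ *ᵥ p) := by rw [mulVec_mulVec, hUi, one_mulVec]
      rw [this, hc, hΥ]
      funext i
      rw [mulVec_diagonal, mul_comm]
    rw [hΨL0, smul_zero, sub_zero] at e2
    have hsum : ∑ i, (β i)⁻¹ * q i = 0 := by
      rw [← neg_zero, ← hLcol (Υ⁻¹ *ᵥ (z ∘ Sum.inl)), ← Finset.sum_neg_distrib]
      refine Finset.sum_congr rfl fun i _ => ?_
      rw [e2, Pi.neg_apply, ← mulVec_mulVec, hΨ, mulVec_diagonal]
      have := (hβ i).ne'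
      field_simp
    rw [hc] at f1
    have hYq : Y *ᵥ q = p + ubar • (Y *ᵥ fun _ => c) := by
      have : Y *ᵥ q = (-p - ubar • (Y *ᵥ fun _ => c) + Y *ᵥ q) + (p + ubar • (Y *ᵥ fun _ => c)) := by
        abel
      rw [this, ← f1, zero_add]
    suffices h : p = 0 ∧ q = 0 by
      rw [h.1, h.2]; funext i; cases i <;> rfl
    by_cases hYs0 : Ys = 0
    · have hYYc : Y = Yc := by rw [hY, hYs0, zero_add]
      have hc0 : c = 0 := by
        have h1 := hYccol q
        rw [← hYYc, hYq, hp, hYYc] at h1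
        simp only [Pi.add_apply, Pi.smul_apply, smul_eq_mul, Finset.sum_add_distrib,
          ← Finset.mul_sum, hYccol] at h1
        have : 0 < ∑ i, Imax i := Finset.sum_pos (fun i _ => hImax i) hne
        rcases mul_eq_zero.1 (by linarith : c * ∑ i, Imax i = 0) with h | h
        · exact h
        · linarith
      have hp0 : p = 0 := by rw [hp, hc0]; funext i; simp
      refine ⟨hp0, ?_⟩
      have hYq0 : Yc *ᵥ q = 0 := by
        rw [← hYYc, hYq, hp0, hc0]
        have : (fun _ : Fin n => (0 : ℝ)) = 0 := rfl
        rw [this]; simp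
      obtain ⟨d, hd⟩ := ker_const hn Yc hYcrow hYcrank q hYq0
      rw [hd] at hsum
      simp only [← Finset.sum_mul] at hsum
      have : 0 < ∑ i, (β i)⁻¹ := Finset.sum_pos (fun i _ => inv_pos.2 (hβ i)) hne
      have hd0 : d = 0 := (mul_eq_zero.1 hsum).resolve_left this.ne'
      rw [hd, hd0]; rfl
    · have hdet : Y.det ≠ 0 := by
        intro hdet
        obtain ⟨x, hx0, hx⟩ := exists_mulVec_eq_zero_iff.2 hdet
        have h1 := hYform x
        rw [hx, dotProduct_zero] at h1
        have h2 : 0 ≤ ∑ i, G i * x i ^ 2 :=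
          Finset.sum_nonneg fun i _ => mul_nonneg (hG i) (sq_nonneg _)
        have h3 := hYcnn x
        have h4 : x ⬝ᵥ (Yc *ᵥ x) = 0 := by linarith
        have h5 : ∑ i, G i * x i ^ 2 = 0 := by linarith
        have hpsdYc : Yc.PosSemidef := by
          refine PosSemidef.of_dotProduct_mulVec_nonneg ?_ (fun x => by simpa using hYcnn x)
          rw [Matrix.IsHermitian, conjTranspose_eq_transpose_of_trivial]; exact hYcsym
        have h6 : Yc *ᵥ x = 0 := (hpsdYc.dotProduct_mulVec_zero_iff x).1 (by simpa using h4)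
        obtain ⟨d, hd⟩ := ker_const hn Yc hYcrow hYcrank x h6
        apply hYs0
        rw [hYs]
        have hd0 : d ≠ 0 := by
          rintro rfl
          exact hx0 hd
        have : G = 0 := by
          funext i
          have := (Finset.sum_eq_zero_iff_of_nonneg
            (fun i _ => mul_nonneg (hG i) (sq_nonneg (x i)))).1 h5 i (Finset.mem_univ _)
          rw [hd] at this
          exact (mul_eq_zero.1 this).resolve_right (pow_ne_zero _ hd0)
        rw [this]; exact diagonal_zero
      have hYi : Y⁻¹ * Y = 1 := Matrix.nonsing_inv_mul _ hdet.isUnit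
      have hq : q = Y⁻¹ *ᵥ p + ubar • (fun _ => c) := by
        have : q = Y⁻¹ *ᵥ (Y *ᵥ q) := by rw [mulVec_mulVec, hYi, one_mulVec]
        rw [this, hYq, mulVec_add, mulVec_smul, mulVec_mulVec _ Y⁻¹ Y, hYi, one_mulVec]
      have hp' : p = c • Imax := hp
      have hnn : ∀ i, 0 ≤ (Y⁻¹ *ᵥ Imax) i := fun i => by
        simp only [mulVec, dotProduct]
        exact Finset.sum_nonneg fun j _ => mul_nonneg (hYinvnn hYs0 i j) (hImax j).le
      have hc0 : c = 0 := by
        have h1 : c * ∑ i, (β i)⁻¹ * ((Y⁻¹ *ᵥ Imax) i + ubar) = 0 := by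
          rw [← hsum, Finset.mul_sum]
          refine Finset.sum_congr rfl fun i _ => ?_
          rw [hq, hp', mulVec_smul]
          simp only [Pi.add_apply, Pi.smul_apply, smul_eq_mul]
          ring
        have : 0 < ∑ i, (β i)⁻¹ * ((Y⁻¹ *ᵥ Imax) i + ubar) :=
          Finset.sum_pos (fun i _ => mul_pos (inv_pos.2 (hβ i)) (by linarith [hnn i])) hne
        exact (mul_eq_zero.1 h1).resolve_right this.ne'
      have hp0 : p = 0 := by rw [hp', hc0, zero_smul]
      refine ⟨hp0, ?_⟩
      rw [hq, hp0, hc0, mulVec_zero]; funext i; simp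
  · -- nonzero eigenvalues
    intro μ hμ z hz0 hz
    by_contra hneg
    push Not at hneg
    set F : Matrix (Fin n) (Fin n) ℝ →+* Matrix (Fin n) (Fin n) ℂ :=
      (algebraMap ℝ ℂ).mapMatrix with hF
    have hFapp : ∀ S, F S = S.map (algebraMap ℝ ℂ) := fun S => rfl
    have hFs : ∀ (a : ℝ) S, F (a • S) = (a : ℂ) • F S := by
      intro a S; ext i j; simp [hFapp]
    rw [fromBlocks_map] at hz
    simp only [← hFapp, map_neg, map_add, map_mul, map_one] at hz
    rw [← Sum.elim_comp_inl_inr z] at hz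
    obtain ⟨ι, hι⟩ : ∃ ι, ι = z ∘ Sum.inl := ⟨_, rfl⟩
    obtain ⟨v, hv⟩ : ∃ v, v = z ∘ Sum.inr := ⟨_, rfl⟩
    rw [← hι, ← hv] at hz
    have hsm : μ • Sum.elim ι v = Sum.elim (μ • ι) (μ • v) := by
      funext i; cases i <;> rfl
    rw [hsm] at hz
    obtain ⟨e1, e2⟩ := blocks_action (F D) (F D⁻¹) (F Y) (F R) (F L) (F Υ⁻¹) (F Ψ) (F Φ)
      (by rw [← map_mul, hDi, map_one]) (rbar : ℂ) (ubar : ℂ) (by rw [hRU, hFs])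
      (by rw [hΦΨ, hFs]) _ _ _ _ hz
    obtain ⟨w, hw⟩ : ∃ w, w = F Υ⁻¹ *ᵥ ι := ⟨_, rfl⟩
    have hιw : ι = F Υ *ᵥ w := by
      rw [hw, mulVec_mulVec, ← map_mul, hUi, map_one, one_mulVec]
    have hw0 : w ≠ 0 := by
      intro h0
      apply hz0
      have hι0 : ι = 0 := by rw [hιw, h0, mulVec_zero]
      rw [hι0] at e2
      simp only [mulVec_zero, smul_zero, neg_zero, sub_zero] at e2
      have hv0 : v = 0 := (smul_eq_zero.1 e2).resolve_left hμ
      rw [← Sum.elim_comp_inl_inr z, ← hι, ← hv, hι0, hv0]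
      funext i; cases i <;> rfl
    rw [mulVec_smul (F Υ⁻¹), ← hw] at e2
    rw [← hw] at e1
    rw [hιw] at e1
    -- quadratic pencil
    have hpen : (μ ^ 2) • (F (D * Υ) *ᵥ w) + μ • (F Υ *ᵥ w + (ubar : ℂ) • (F Y *ᵥ w)
        + (rbar : ℂ) • (F (Y * Ψ * L) *ᵥ w)) + F (Y * Ψ * L) *ᵥ w = 0 := by
      have e3 := congrArg (fun u => μ • u) e1
      simp only [smul_add, smul_sub, smul_neg] at e3
      rw [← mulVec_smul (F Y) μ v, e2] at e3
      simp only [mulVec_smul, mulVec_sub, mulVec_neg, mulVec_mulVec, ← map_mul, ← mul_assoc] at e3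
      rw [smul_smul, ← pow_two] at e3
      rw [e3, smul_add, smul_add, smul_comm (rbar : ℂ) μ]
      abel
    have hdot := congrArg (fun u => star w ⬝ᵥ u) hpen
    simp only [dotProduct_add, dotProduct_smul, dotProduct_zero, hFapp, cplx_form] at hdot
    obtain ⟨x, hx⟩ : ∃ x : Fin n → ℝ, x = fun i => (w i).re := ⟨_, rfl⟩
    obtain ⟨y, hy⟩ : ∃ y : Fin n → ℝ, y = fun i => (w i).im := ⟨_, rfl⟩
    rw [← hx, ← hy] at hdot
    have htr : ∀ (S : Matrix (Fin n) (Fin n) ℝ) (a b : Fin n → ℝ),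
        a ⬝ᵥ (Sᵀ *ᵥ b) = b ⬝ᵥ (S *ᵥ a) := by
      intro S a b
      rw [mulVec_transpose, dotProduct_comm, ← dotProduct_mulVec]
    have hsymz : ∀ S : Matrix (Fin n) (Fin n) ℝ, S.IsSymm → x ⬝ᵥ (S *ᵥ y) - y ⬝ᵥ (S *ᵥ x) = 0 := by
      intro S hS
      have := htr S x y
      rw [hS.eq] at this
      linarith
    have hDU : D * Υ = diagonal fun i => τ i * Imax i := by rw [hD, hΥ, diagonal_mul_diagonal]
    rw [hsymz (D * Υ) (by rw [hDU]; exact isSymm_diagonal _),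
      hsymz Υ (by rw [hΥ]; exact isSymm_diagonal _), hsymz Y hYsym] at hdot
    obtain ⟨M, hM⟩ : ∃ M, M = Y * Ψ * L := ⟨_, rfl⟩
    have hMT : L * Ψ * Y = Mᵀ := by
      rw [hM, transpose_mul, transpose_mul, hYsym.eq, hLsym.eq, hΨ, diagonal_transpose, mul_assoc]
    rw [hMT, ← hM] at hpsd
    rw [← hM] at hdot hθ
    obtain ⟨hθ0, hθ1, hθ2⟩ := hθ
    -- positivity facts
    have g1 := hpsd.dotProduct_mulVec_nonneg x
    have g2 := hpsd.dotProduct_mulVec_nonneg y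
    have g3 := hθ1.dotProduct_mulVec_nonneg (Sum.elim x y)
    have g4 := hθ2.dotProduct_mulVec_nonneg (Sum.elim x y)
    simp only [star_trivial, fromBlocks_mulVec, Sum.elim_comp_inl, Sum.elim_comp_inr,
      sumElim_dotProduct_sumElim, dotProduct_add, dotProduct_sub, add_mulVec, sub_mulVec,
      smul_mulVec, dotProduct_smul, smul_eq_mul, transpose_sub, transpose_smul,
      transpose_transpose, htr] at g1 g2 g3 g4
    have hdiag : ∀ d : Fin n → ℝ, x ⬝ᵥ (diagonal d *ᵥ x) + y ⬝ᵥ (diagonal d *ᵥ y)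
        = ∑ i, d i * (x i ^ 2 + y i ^ 2) := by
      intro d
      simp only [dotProduct, mulVec_diagonal, ← Finset.sum_add_distrib]
      exact Finset.sum_congr rfl fun i _ => by ring
    obtain ⟨i₀, hi₀⟩ : ∃ i, w i ≠ 0 := Function.ne_iff.1 hw0
    have hxy : 0 < x i₀ ^ 2 + y i₀ ^ 2 := by
      rw [hx, hy]
      have := Complex.normSq_pos.2 hi₀
      rw [Complex.normSq_apply] at this
      simp only; nlinarith
    have hpos : ∀ d : Fin n → ℝ, (∀ i, 0 < d i) →
        0 < x ⬝ᵥ (diagonal d *ᵥ x) + y ⬝ᵥ (diagonal d *ᵥ y) := by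
      intro d hd
      rw [hdiag]
      exact Finset.sum_pos' (fun i _ => mul_nonneg (hd i).le (by positivity))
        ⟨i₀, Finset.mem_univ _, mul_pos (hd i₀) hxy⟩
    have ha : 0 < x ⬝ᵥ ((D * Υ) *ᵥ x) + y ⬝ᵥ ((D * Υ) *ᵥ y) := by
      rw [hDU]; exact hpos _ fun i => mul_pos (hτ i) (hImax i)
    have hU : 0 < x ⬝ᵥ (Υ *ᵥ x) + y ⬝ᵥ (Υ *ᵥ y) := by
      rw [hΥ]; exact hpos _ hImax
    obtain ⟨T, hT⟩ : ∃ T, T = Finset.univ.sup' ⟨⟨0, by omega⟩, hn0⟩ τ := ⟨_, rfl⟩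
    have haT : x ⬝ᵥ ((D * Υ) *ᵥ x) + y ⬝ᵥ ((D * Υ) *ᵥ y)
        ≤ T * (x ⬝ᵥ (Υ *ᵥ x) + y ⬝ᵥ (Υ *ᵥ y)) := by
      rw [hDU, hΥ, hdiag, hdiag, Finset.mul_sum]
      refine Finset.sum_le_sum fun i _ => ?_
      have h1 : τ i ≤ T := by rw [hT]; exact Finset.le_sup' τ (Finset.mem_univ i)
      have h2 := (hImax i).le
      rw [← mul_assoc]
      gcongr
    have hYx := mul_nonneg hubar.le (hYnn x)
    have hYy := mul_nonneg hubar.le (hYnn y)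
    have dre := congrArg Complex.re hdot
    have dim := congrArg Complex.im hdot
    simp only [Complex.add_re, Complex.add_im, Complex.mul_re, Complex.mul_im, smul_eq_mul,
      Complex.ofReal_re, Complex.ofReal_im, pow_two, Complex.zero_re, Complex.zero_im] at dre dim
    have hfin := scalar_stable _ ((x ⬝ᵥ (Υ *ᵥ x) + y ⬝ᵥ (Υ *ᵥ y))
        + ubar * (x ⬝ᵥ (Y *ᵥ x) + y ⬝ᵥ (Y *ᵥ y)))
      (x ⬝ᵥ (M *ᵥ x) + y ⬝ᵥ (M *ᵥ y)) (x ⬝ᵥ (M *ᵥ y) - y ⬝ᵥ (M *ᵥ x)) rbar ν₁ θ T _ μ.re μ.im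
      ha hU (by linarith) haT hrbar hν₁ (by linarith) (by linarith) (by linarith)
      (by rw [hT]; exact hgain) hneg (by linear_combination dre) (by linear_combination dim)
    exact hμ (Complex.ext hfin.1 hfin.2)
end

section
/- Let n ≥ 2. Let Y_c and L be real symmetric n×n weighted graph Laplacians (nonpositive off-diagonal entries, zero row sums), each of rank n−1 (connected), let Y_s be diagonal with nonnegative entries, Y_s ≠ 0, and Y = Y_s + Y_c (so Y is positive definite); assume Y⁻¹ is entrywise nonnegative. Let Υ = diag(I_1^max,…,I_n^max) with I_i^max > 0 and R diagonal with strictly positive entries. Suppose there exist positive scalars τ, r̄, β and ν₂ such that D = τ·E, Ψ = β·E, Φ = r̄·β·E, the symmetric matrix (Y⁻¹Υ + ΥY⁻¹)/2 + RΥ − ν₂·β·L is positive semidefinite, and there exists θ ≥ 0 admissible for Y⁻¹Υ with (ν₂ + r̄)·θ² + ν₂ + r̄ > τ. Then the closed-loop matrix A_c is semistable. -/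
open Matrix Filter Topology

open scoped Matrix.Norms.Operator in
theorem aux_exp_hasSum {N : Type*} [Fintype N] [DecidableEq N] (B : Matrix N N ℂ) (x : N → ℂ) :
    HasSum (fun k : ℕ => ((k.factorial : ℂ)⁻¹) • (B ^ k *ᵥ x)) (NormedSpace.exp B *ᵥ x) := by
  have h := NormedSpace.exp_series_hasSum_exp' (𝕂 := ℂ) B
  have h2 := h.map ((Matrix.mulVecBilin ℂ ℂ).flip x : Matrix N N ℂ →ₗ[ℂ] (N → ℂ))
    (LinearMap.continuous_of_finiteDimensional _)
  convert h2 using 1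
  · ext k
    simp
  · rfl

open scoped Matrix.Norms.Operator in
theorem aux_exp_map {N : Type*} [Fintype N] [DecidableEq N] (B : Matrix N N ℝ) :
    (NormedSpace.exp B).map (fun r : ℝ => (r : ℂ)) =
      NormedSpace.exp (B.map (fun r : ℝ => (r : ℂ))) := by
  have := NormedSpace.map_exp (RingHom.mapMatrix (m := N) Complex.ofRealHom)
    (by
      show Continuous (fun M : Matrix N N ℝ => M.map (Complex.ofRealHom))
      exact continuous_id.matrix_map Complex.continuous_ofReal) B
  exact this

theorem aux_exp_finite {N : Type*} [Fintype N] [DecidableEq N] (B : Matrix N N ℂ) (x : N → ℂ)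
    (μ : ℂ) (K : ℕ) (hK : (B - μ • 1) ^ K *ᵥ x = 0) (t : ℝ) :
    NormedSpace.exp ((t : ℂ) • B) *ᵥ x =
      ∑ k ∈ Finset.range K, ((k.factorial : ℂ)⁻¹ * ((t : ℂ) ^ k * Complex.exp (t * μ))) •
        ((B - μ • 1) ^ k *ᵥ x) := by
  have e1 : (t : ℂ) • B = ((t : ℂ) * μ) • (1 : Matrix N N ℂ) + (t : ℂ) • (B - μ • 1) := by
    rw [smul_sub, smul_smul]; abel
  have e2 : NormedSpace.exp (((t : ℂ) * μ) • (1 : Matrix N N ℂ)) =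
      Complex.exp (t * μ) • (1 : Matrix N N ℂ) := by
    rw [← Matrix.diagonal_one, ← Matrix.diagonal_smul, Matrix.exp_diagonal,
      ← Matrix.diagonal_smul]
    congr 1
    rw [Pi.exp_def]
    ext i
    simp [Complex.exp_eq_exp_ℂ]
  have e3 : NormedSpace.exp ((t : ℂ) • (B - μ • 1)) *ᵥ x =
      ∑ k ∈ Finset.range K, ((k.factorial : ℂ)⁻¹ * (t : ℂ) ^ k) • ((B - μ • 1) ^ k *ᵥ x) := by
    refine (aux_exp_hasSum _ x).unique ?_
    have : (fun k : ℕ => ((k.factorial : ℂ)⁻¹) • (((t : ℂ) • (B - μ • 1)) ^ k *ᵥ x)) =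
      fun k : ℕ => ((k.factorial : ℂ)⁻¹ * (t : ℂ) ^ k) • ((B - μ • 1) ^ k *ᵥ x) := by
      ext1 k
      rw [smul_pow, Matrix.smul_mulVec, smul_smul]
    rw [this]
    apply hasSum_sum_of_ne_finset_zero
    intro k hk
    have hk' : K ≤ k := by simpa using hk
    obtain ⟨j, rfl⟩ := Nat.exists_eq_add_of_le' hk'
    rw [pow_add (B - μ • 1), ← Matrix.mulVec_mulVec, hK]
    simp
  rw [e1, Matrix.exp_add_of_commute _ _ ((Commute.one_left _).smul_left _), e2,
    ← Matrix.mulVec_mulVec, e3, Matrix.smul_mulVec, Matrix.one_mulVec, Finset.smul_sum]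
  refine Finset.sum_congr rfl fun k _ => ?_
  rw [smul_smul]; congr 1; ring

theorem aux_decay (k : ℕ) (μ : ℂ) (hμ : μ.re < 0) :
    Tendsto (fun t : ℝ => (t : ℂ) ^ k * Complex.exp (t * μ)) atTop (𝓝 0) := by
  rw [tendsto_zero_iff_norm_tendsto_zero]
  have h := tendsto_rpow_mul_exp_neg_mul_atTop_nhds_zero k (-μ.re) (by linarith)
  refine h.congr' ?_
  filter_upwards [eventually_ge_atTop 0] with t ht
  rw [norm_mul, Complex.norm_exp, norm_pow]
  simp [abs_of_nonneg ht, mul_comm]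

theorem aux_complex {N : Type*} [Fintype N] [DecidableEq N] (B : Matrix N N ℂ)
    (h1 : ∀ (μ : ℂ) (z : N → ℂ), z ≠ 0 → B *ᵥ z = μ • z → μ.re < 0 ∨ μ = 0)
    (h2 : ∀ z, B *ᵥ (B *ᵥ z) = 0 → B *ᵥ z = 0) (x : N → ℂ) :
    ∃ y, Tendsto (fun t : ℝ => NormedSpace.exp ((t : ℂ) • B) *ᵥ x) atTop (𝓝 y) := by
  let S : Submodule ℂ (N → ℂ) :=
    { carrier := {x | ∃ y, Tendsto (fun t : ℝ => NormedSpace.exp ((t : ℂ) • B) *ᵥ x) atTop (𝓝 y)}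
      add_mem' := by
        rintro a b ⟨y, hy⟩ ⟨y', hy'⟩
        exact ⟨y + y', by simpa [Matrix.mulVec_add] using hy.add hy'⟩
      zero_mem' := ⟨0, by simp⟩
      smul_mem' := by
        rintro c a ⟨y, hy⟩
        exact ⟨c • y, by simpa [Matrix.mulVec_smul] using hy.const_smul c⟩ }
  suffices S = ⊤ by
    have : x ∈ S := this ▸ Submodule.mem_top
    exact this
  rw [eq_top_iff, ← Module.End.iSup_maxGenEigenspace_eq_top (Matrix.toLin' B)]
  refine iSup_le fun μ z hz => ?_
  rw [Module.End.mem_maxGenEigenspace] at hz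
  obtain ⟨K, hK⟩ := hz
  have hpow : ∀ k (z : N → ℂ), ((Matrix.toLin' B - μ • 1) ^ k) z = (B - μ • 1) ^ k *ᵥ z := by
    intro k z
    have : Matrix.toLin' B - μ • 1 = Matrix.toLin' (B - μ • 1) := by
      rw [map_sub, map_smul, Matrix.toLin'_one]; rfl
    rw [this, ← Matrix.toLin'_pow, Matrix.toLin'_apply]
  rw [hpow] at hK
  by_cases hz : z = 0
  · rw [hz]; exact S.zero_mem
  -- an eigenvector exists
  have hμ : μ.re < 0 ∨ μ = 0 := by
    have hex : ∃ k, (B - μ • 1) ^ k *ᵥ z = 0 := ⟨K, hK⟩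
    classical
    have hs := Nat.find_spec hex
    have hm := fun m => Nat.find_min hex (m := m)
    rcases hk : Nat.find hex with _ | m
    · rw [hk] at hs; simp at hs; exact absurd hs hz
    · rw [hk] at hs
      refine h1 μ ((B - μ • 1) ^ m *ᵥ z) (hm m (by omega)) ?_
      rw [pow_succ', ← Matrix.mulVec_mulVec, Matrix.sub_mulVec, Matrix.smul_mulVec,
        Matrix.one_mulVec, sub_eq_zero] at hs
      exact hs
  show ∃ y, _
  rcases hμ with hμ | rfl
  · refine ⟨∑ k ∈ Finset.range K, ((k.factorial : ℂ)⁻¹ * 0) • ((B - μ • 1) ^ k *ᵥ z), ?_⟩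
    simp_rw [aux_exp_finite B z μ K hK]
    refine tendsto_finsetSum _ fun k _ => ?_
    exact ((aux_decay k μ hμ).const_mul _).smul_const _
  · have hB : ∀ k, B ^ (k + 1) *ᵥ z = 0 → B *ᵥ z = 0 := by
      intro k
      induction k with
      | zero => intro h; simpa using h
      | succ k ih =>
        intro h
        apply ih
        rw [pow_succ', ← Matrix.mulVec_mulVec]
        apply h2
        rw [pow_succ', pow_succ', ← Matrix.mulVec_mulVec, ← Matrix.mulVec_mulVec] at h
        exact h
    have hBz : B *ᵥ z = 0 := by
      apply hB K
      rw [pow_succ', ← Matrix.mulVec_mulVec]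
      simp at hK
      rw [hK]; simp
    have hf := aux_exp_finite B z 0 1 (by simpa using hBz)
    refine ⟨z, ?_⟩
    simp_rw [hf]
    simp

theorem aux_real {N : Type*} [Fintype N] [DecidableEq N] (A : Matrix N N ℝ)
    (h1 : ∀ (σ ω : ℝ) (a b : N → ℝ), A *ᵥ a = σ • a - ω • b → A *ᵥ b = ω • a + σ • b →
      (a ≠ 0 ∨ b ≠ 0) → 0 ≤ σ → σ = 0 ∧ ω = 0)
    (h2 : ∀ z, A *ᵥ (A *ᵥ z) = 0 → A *ᵥ z = 0) : IsSemistable A := by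
  have hre : ∀ z : N → ℂ, (fun i => ((A.map (fun r : ℝ => (r : ℂ))) *ᵥ z) i |>.re) =
      A *ᵥ (fun i => (z i).re) := by
    intro z; ext i; simp [Matrix.mulVec, dotProduct]
  have him : ∀ z : N → ℂ, (fun i => ((A.map (fun r : ℝ => (r : ℂ))) *ᵥ z) i |>.im) =
      A *ᵥ (fun i => (z i).im) := by
    intro z; ext i; simp [Matrix.mulVec, dotProduct]
  intro x₀
  obtain ⟨y, hy⟩ := aux_complex (A.map (fun r : ℝ => (r : ℂ))) (by
    intro μ z hz hB
    by_contra hcon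
    push Not at hcon
    have e1 := hre z
    have e2 := him z
    rw [hB] at e1 e2
    have := h1 μ.re μ.im (fun i => (z i).re) (fun i => (z i).im)
      (by rw [← e1]; ext i; simp) (by rw [← e2]; ext i; simp; ring)
      (by
        by_contra hc
        push Not at hc
        apply hz
        ext i
        exact Complex.ext (congrFun hc.1 i) (congrFun hc.2 i)) hcon.1
    exact hcon.2 (Complex.ext this.1 this.2)) (by
    intro z hz
    have e1 := hre z
    have e2 := him z
    have e3 := hre (A.map (fun r : ℝ => (r : ℂ)) *ᵥ z)
    have e4 := him (A.map (fun r : ℝ => (r : ℂ)) *ᵥ z)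
    rw [hz] at e3 e4
    rw [e1] at e3
    rw [e2] at e4
    rw [h2 _ e3.symm] at e1
    rw [h2 _ e4.symm] at e2
    ext i
    exact Complex.ext (congrFun e1 i) (congrFun e2 i)) (fun i => (x₀ i : ℂ))
  refine ⟨fun i => (y i).re, ?_⟩
  have hc : Continuous (fun v : N → ℂ => fun i => (v i).re) := by fun_prop
  have := (hc.tendsto y).comp hy
  refine this.congr fun t => ?_
  have : (t : ℂ) • A.map (fun r : ℝ => (r : ℂ)) = (t • A).map (fun r : ℝ => (r : ℂ)) := by
    ext i j; simp
  simp only [Function.comp]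
  rw [this, ← aux_exp_map]
  ext i
  simp [Matrix.mulVec, dotProduct]

theorem aux_scalar (τ κ rbar ν θ σ ω ms mk ρ p s1 s2 : ℝ) (hτ : 0 < τ) (hr : 0 < rbar)
    (hν : 0 < ν) (hκ : κ = ν + rbar) (hθ : 0 ≤ θ) (hgain : τ < κ * (1 + θ ^ 2))
    (hσ : 0 ≤ σ) (hne : ¬ (σ = 0 ∧ ω = 0)) (hms : 0 ≤ ms) (hρ : 0 < ρ) (hp : 0 ≤ p)
    (ha1 : θ * mk ≤ ms) (ha2 : -(θ * mk) ≤ ms) (hpsd : ν * p ≤ ms + ρ)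
    (e1 : s1 = τ * (σ * ms - ω * mk) + ms + ρ) (e2 : s2 = τ * (ω * ms + σ * mk) + mk)
    (e3 : σ * s1 - ω * s2 = -(p * (1 + rbar * σ)))
    (e4 : ω * s1 + σ * s2 = -(p * (rbar * ω))) : False := by
  have hΔ : 0 < σ ^ 2 + ω ^ 2 := by
    rcases lt_or_eq_of_le (by positivity : 0 ≤ σ ^ 2 + ω ^ 2) with h | h
    · exact h
    · exact absurd ⟨by nlinarith, by nlinarith⟩ hne
  have f1 : (σ ^ 2 + ω ^ 2) * s1 = -(p * (σ + rbar * (σ ^ 2 + ω ^ 2))) := by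
    linear_combination σ * e3 + ω * e4
  have f2 : (σ ^ 2 + ω ^ 2) * s2 = p * ω := by
    linear_combination σ * e4 - ω * e3
  have g1 : s1 ≤ -(rbar * p) := by
    have : (σ ^ 2 + ω ^ 2) * (s1 + rbar * p) ≤ 0 := by
      have : 0 ≤ p * σ := by positivity
      nlinarith
    by_contra hc
    push Not at hc
    have := mul_pos hΔ (by linarith : 0 < s1 + rbar * p)
    linarith
  have g2 : ω * s2 ≤ p := by
    have : (σ ^ 2 + ω ^ 2) * (p - ω * s2) = p * σ ^ 2 := by linear_combination (-ω) * f2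
    have h0 : 0 ≤ p * σ ^ 2 := by positivity
    by_contra hc
    push Not at hc
    have := mul_pos hΔ (by linarith : 0 < ω * s2 - p)
    nlinarith
  -- q = ω * mk
  have hσms : 0 ≤ τ * (σ * ms) := by positivity
  have k1 : ms + ρ + rbar * p ≤ τ * (ω * mk) := by nlinarith
  have hq : 0 < ω * mk := by
    have : 0 < τ * (ω * mk) := by nlinarith [mul_nonneg hr.le hp]
    exact (pos_iff_pos_of_mul_pos this).mp hτ
  have k2 : κ * p ≤ τ * (ω * mk) := by rw [hκ]; linarith
  have k3 : τ * (ω ^ 2 * ms) + ω * mk ≤ p := by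
    have : 0 ≤ τ * σ * (ω * mk) := by positivity
    rw [e2] at g2
    nlinarith
  -- absolute values
  have hk : θ * |mk| ≤ ms := by
    rcases abs_cases mk with ⟨h, _⟩ | ⟨h, _⟩ <;> rw [h] <;> linarith
  have hab : |ω| * |mk| = ω * mk := by rw [← abs_mul, abs_of_pos hq]
  have hmk : 0 < |mk| := abs_pos.mpr (by rintro rfl; simp at hq)
  have k4 : θ ≤ τ * |ω| := by
    have h0 : θ * |mk| ≤ τ * |ω| * |mk| := by
      rw [mul_assoc, hab]
      nlinarith [mul_nonneg hr.le hp]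
    exact le_of_mul_le_mul_right h0 hmk
  have k5 : θ ^ 2 * (ω * mk) ≤ τ * (ω ^ 2 * ms) := by
    have h1 : θ * (ω * mk) ≤ |ω| * ms := by
      have h0 := mul_le_mul_of_nonneg_left hk (abs_nonneg ω)
      calc θ * (ω * mk) = |ω| * (θ * |mk|) := by rw [← hab]; ring
        _ ≤ |ω| * ms := h0
    have h2 : θ * (|ω| * ms) ≤ τ * |ω| * (|ω| * ms) :=
      mul_le_mul_of_nonneg_right k4 (by positivity)
    have h3 : |ω| * |ω| = ω ^ 2 := by rw [abs_mul_abs_self]; ring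
    calc θ ^ 2 * (ω * mk) = θ * (θ * (ω * mk)) := by ring
      _ ≤ θ * (|ω| * ms) := mul_le_mul_of_nonneg_left h1 hθ
      _ ≤ τ * |ω| * (|ω| * ms) := h2
      _ = τ * (ω ^ 2 * ms) := by rw [← h3]; ring
  have k6 : (1 + θ ^ 2) * (ω * mk) ≤ p := by linarith
  have hκ0 : 0 < κ := by linarith
  have k7 := mul_le_mul_of_nonneg_left k6 hκ0.le
  have k8 := mul_lt_mul_of_pos_right hgain hq
  linarith

theorem aux_lap {n : ℕ} (L : Matrix (Fin n) (Fin n) ℝ) (hs : L.IsSymm)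
    (hoff : ∀ i j, i ≠ j → L i j ≤ 0) (hrow : ∀ i, ∑ j, L i j = 0) (x : Fin n → ℝ) :
    0 ≤ x ⬝ᵥ L *ᵥ x := by
  have hcol : ∀ j, ∑ i, L i j = 0 := by
    intro j; rw [← hrow j]; exact Finset.sum_congr rfl fun i _ => hs.apply j i
  have key : 2 * (x ⬝ᵥ L *ᵥ x) = ∑ i, ∑ j, -L i j * (x i - x j) ^ 2 := by
    have a1 : ∑ i, ∑ j, L i j * x i ^ 2 = 0 := by
      simp_rw [← Finset.sum_mul, hrow]; simp
    have a2 : ∑ i, ∑ j, L i j * x j ^ 2 = 0 := by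
      rw [Finset.sum_comm]; simp_rw [← Finset.sum_mul, hcol]; simp
    have a3 : x ⬝ᵥ L *ᵥ x = ∑ i, ∑ j, L i j * x i * x j := by
      simp only [dotProduct, Matrix.mulVec, Finset.mul_sum]
      exact Finset.sum_congr rfl fun i _ => Finset.sum_congr rfl fun j _ => by ring
    have : ∑ i, ∑ j, -L i j * (x i - x j) ^ 2 = 2 * (∑ i, ∑ j, L i j * x i * x j)
      - (∑ i, ∑ j, L i j * x i ^ 2) - ∑ i, ∑ j, L i j * x j ^ 2 := by
      simp only [Finset.mul_sum, ← Finset.sum_sub_distrib]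
      exact Finset.sum_congr rfl fun i _ => Finset.sum_congr rfl fun j _ => by ring
    rw [this, a1, a2, a3]; ring
  have : 0 ≤ ∑ i, ∑ j, -L i j * (x i - x j) ^ 2 := by
    refine Finset.sum_nonneg fun i _ => Finset.sum_nonneg fun j _ => ?_
    by_cases h : i = j
    · simp [h]
    · exact mul_nonneg (by linarith [hoff i j h]) (sq_nonneg _)
  linarith

theorem aux_dot_symm {n : ℕ} (L : Matrix (Fin n) (Fin n) ℝ) (hs : L.IsSymm)
    (x y : Fin n → ℝ) : x ⬝ᵥ L *ᵥ y = y ⬝ᵥ L *ᵥ x := by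
  rw [Matrix.dotProduct_mulVec, ← Matrix.mulVec_transpose, hs.eq, dotProduct_comm]

theorem aux_dot_transpose {n : ℕ} (M : Matrix (Fin n) (Fin n) ℝ)
    (x y : Fin n → ℝ) : x ⬝ᵥ Mᵀ *ᵥ y = y ⬝ᵥ M *ᵥ x := by
  rw [Matrix.mulVec_transpose, dotProduct_comm, Matrix.dotProduct_mulVec]

theorem aux_adm {n : ℕ} (M : Matrix (Fin n) (Fin n) ℝ) (θ : ℝ)
    (h : (Matrix.fromBlocks ((1 / 2 : ℝ) • (M + Mᵀ)) (θ • ((1 / 2 : ℝ) • (M - Mᵀ)))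
      (θ • ((1 / 2 : ℝ) • (M - Mᵀ))ᵀ) ((1 / 2 : ℝ) • (M + Mᵀ))).PosSemidef)
    (u v : Fin n → ℝ) :
    -(θ * (u ⬝ᵥ M *ᵥ v - v ⬝ᵥ M *ᵥ u)) ≤ u ⬝ᵥ M *ᵥ u + v ⬝ᵥ M *ᵥ v := by
  have := h.dotProduct_mulVec_nonneg (Sum.elim u v)
  simp only [star_trivial, Matrix.fromBlocks_mulVec, Sum.elim_comp_inl, Sum.elim_comp_inr,
    sumElim_dotProduct_sumElim, Matrix.transpose_smul, Matrix.transpose_sub,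
    Matrix.transpose_transpose, Matrix.smul_mulVec, Matrix.add_mulVec, Matrix.sub_mulVec,
    dotProduct_add, dotProduct_sub, dotProduct_smul, aux_dot_transpose, smul_eq_mul] at this
  linarith

/-- The core: no eigenvalue with nonnegative real part other than zero, in real form. -/
theorem aux_core {n : ℕ} (M L : Matrix (Fin n) (Fin n) ℝ) (d : Fin n → ℝ)
    (hd : ∀ i, 0 < d i) (hLs : L.IsSymm) (hL0 : ∀ x, 0 ≤ x ⬝ᵥ L *ᵥ x)
    (τ rbar β ν θ : ℝ) (hτ : 0 < τ) (hr : 0 < rbar) (hβ : 0 < β) (hν : 0 < ν)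
    (hpsd : ∀ x, ν * β * (x ⬝ᵥ L *ᵥ x) ≤ x ⬝ᵥ M *ᵥ x + x ⬝ᵥ diagonal d *ᵥ x)
    (hθ : IsAdmissible θ M) (hgain : (ν + rbar) * θ ^ 2 + ν + rbar > τ)
    (σ ω : ℝ) (hσ : 0 ≤ σ) (u v yu yv : Fin n → ℝ)
    (hne : u ≠ 0 ∨ v ≠ 0)
    (e1 : yu = τ • M *ᵥ (σ • u - ω • v) + M *ᵥ u + diagonal d *ᵥ u)
    (e2 : yv = τ • M *ᵥ (ω • u + σ • v) + M *ᵥ v + diagonal d *ᵥ v)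
    (e3 : σ • yu - ω • yv = -(β • L *ᵥ (u + rbar • (σ • u - ω • v))))
    (e4 : ω • yu + σ • yv = -(β • L *ᵥ (v + rbar • (ω • u + σ • v)))) :
    σ = 0 ∧ ω = 0 := by
  obtain ⟨hθ0, ha, hb⟩ := hθ
  have ha := aux_adm M θ ha u v
  have hb := aux_adm M (-θ) hb u v
  by_contra hcon
  have hdn : ∀ x : Fin n → ℝ, 0 ≤ x ⬝ᵥ diagonal d *ᵥ x := by
    intro x
    simp only [dotProduct, Matrix.mulVec_diagonal]
    exact Finset.sum_nonneg fun i _ => by nlinarith [hd i, mul_nonneg (hd i).le (sq_nonneg (x i))]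
  have hdp : ∀ x : Fin n → ℝ, x ≠ 0 → 0 < x ⬝ᵥ diagonal d *ᵥ x := by
    intro x hx
    obtain ⟨i, hi⟩ := Function.ne_iff.mp hx
    simp only [dotProduct, Matrix.mulVec_diagonal]
    refine Finset.sum_pos' (fun i _ => by nlinarith [hd i, mul_nonneg (hd i).le (sq_nonneg (x i))])
      ⟨i, Finset.mem_univ _, ?_⟩
    have hi' : x i ≠ 0 := hi
    have := mul_pos (hd i) (by positivity : 0 < x i ^ 2)
    nlinarith
  have hds := aux_dot_symm (diagonal d) (Matrix.isSymm_diagonal d) u v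
  have hls := aux_dot_symm L hLs u v
  have u1 := congrArg (fun z => u ⬝ᵥ z) e1
  have v1 := congrArg (fun z => v ⬝ᵥ z) e1
  have u2 := congrArg (fun z => u ⬝ᵥ z) e2
  have v2 := congrArg (fun z => v ⬝ᵥ z) e2
  have u3 := congrArg (fun z => u ⬝ᵥ z) e3
  have v3 := congrArg (fun z => v ⬝ᵥ z) e3
  have u4 := congrArg (fun z => u ⬝ᵥ z) e4
  have v4 := congrArg (fun z => v ⬝ᵥ z) e4
  simp only [Matrix.mulVec_add, Matrix.mulVec_sub, Matrix.mulVec_smul, dotProduct_add,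
    dotProduct_sub, dotProduct_smul, dotProduct_neg, smul_eq_mul] at u1 v1 u2 v2 u3 v3 u4 v4
  have hm : 0 ≤ u ⬝ᵥ M *ᵥ u + v ⬝ᵥ M *ᵥ v := by linarith
  refine aux_scalar τ (ν + rbar) rbar ν θ σ ω (u ⬝ᵥ M *ᵥ u + v ⬝ᵥ M *ᵥ v)
    (u ⬝ᵥ M *ᵥ v - v ⬝ᵥ M *ᵥ u) (u ⬝ᵥ diagonal d *ᵥ u + v ⬝ᵥ diagonal d *ᵥ v)
    (β * (u ⬝ᵥ L *ᵥ u + v ⬝ᵥ L *ᵥ v)) (u ⬝ᵥ yu + v ⬝ᵥ yv) (u ⬝ᵥ yv - v ⬝ᵥ yu)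
    hτ hr hν rfl hθ0 (by linarith) hσ hcon hm ?_
    (mul_nonneg hβ.le (add_nonneg (hL0 u) (hL0 v))) (by linarith) (by linarith)
    (by linarith [hpsd u, hpsd v]) ?_ ?_ ?_ ?_
  · rcases hne with h | h
    · linarith [hdp u h, hdn v]
    · linarith [hdp v h, hdn u]
  · rw [u1, v2]; ring
  · rw [u2, v1]; linear_combination hds
  · linear_combination u3 + v4 + (β * rbar * ω) * hls
  · linear_combination u4 - v3 - β * (1 + rbar * σ) * hls

theorem aux_key {n : ℕ} (Y L : Matrix (Fin n) (Fin n) ℝ) (hdet : IsUnit Y.det)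
    (Imax Rv : Fin n → ℝ) (hImax : ∀ i, 0 < Imax i) (τ rbar β : ℝ) (hτ : 0 < τ)
    (A_c : Matrix (Fin n ⊕ Fin n) (Fin n ⊕ Fin n) ℝ)
    (D Ψ Φ : Matrix (Fin n) (Fin n) ℝ)
    (hD : D = τ • (1 : Matrix (Fin n) (Fin n) ℝ))
    (hΨ : Ψ = β • (1 : Matrix (Fin n) (Fin n) ℝ))
    (hΦ : Φ = (rbar * β) • (1 : Matrix (Fin n) (Fin n) ℝ))
    (hA : A_c = Matrix.fromBlocks
      (-(D⁻¹ * (1 + Y * diagonal Rv))) (D⁻¹ * Y)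
      (-(Ψ * L * (diagonal Imax)⁻¹) + Φ * L * (diagonal Imax)⁻¹ * D⁻¹ * (1 + Y * diagonal Rv))
      (-(Φ * L * (diagonal Imax)⁻¹ * D⁻¹ * Y)))
    (u u' y y' : Fin n → ℝ)
    (h : A_c *ᵥ Sum.elim (diagonal Imax *ᵥ u) y = Sum.elim (diagonal Imax *ᵥ u') y') :
    y = τ • (Y⁻¹ * diagonal Imax) *ᵥ u' + (Y⁻¹ * diagonal Imax) *ᵥ u
        + diagonal (fun i => Rv i * Imax i) *ᵥ u ∧
    y' = -(β • L *ᵥ (u + rbar • u')) := by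
  have hDinv : D⁻¹ = τ⁻¹ • (1 : Matrix (Fin n) (Fin n) ℝ) := by
    apply Matrix.inv_eq_left_inv
    rw [hD]; simp [hτ.ne']
  have hIinv : ∀ w, (diagonal Imax)⁻¹ *ᵥ (diagonal Imax *ᵥ w) = w := by
    intro w
    rw [Matrix.mulVec_mulVec, Matrix.nonsing_inv_mul, Matrix.one_mulVec]
    rw [Matrix.det_diagonal]
    exact (Finset.prod_ne_zero_iff.mpr fun i _ => (hImax i).ne').isUnit
  have hYinv : ∀ w, Y⁻¹ *ᵥ (Y *ᵥ w) = w := by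
    intro w
    rw [Matrix.mulVec_mulVec, Matrix.nonsing_inv_mul _ hdet, Matrix.one_mulVec]
  rw [hA, Matrix.fromBlocks_mulVec] at h
  have t := congrArg (fun z => z ∘ Sum.inl) h
  have b := congrArg (fun z => z ∘ Sum.inr) h
  simp only [Sum.elim_comp_inl, Sum.elim_comp_inr] at t b
  set x := diagonal Imax *ᵥ u with hx
  set x' := diagonal Imax *ᵥ u' with hx'
  have t2 : D⁻¹ *ᵥ (Y *ᵥ y - (1 + Y * diagonal Rv) *ᵥ x) = x' := by
    rw [← t, Matrix.mulVec_sub, Matrix.neg_mulVec, Matrix.mulVec_mulVec, Matrix.mulVec_mulVec]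
    abel
  constructor
  · have t3 : Y *ᵥ y = τ • x' + x + Y *ᵥ (diagonal Rv *ᵥ x) := by
      have := congrArg (fun z => τ • z) t2
      simp only [hDinv, Matrix.smul_mulVec, Matrix.one_mulVec, smul_smul,
        mul_inv_cancel₀ hτ.ne', one_smul, Matrix.add_mulVec] at this
      rw [← this, Matrix.mulVec_mulVec x Y (diagonal Rv)]; abel
    have t4 := congrArg (fun z => Y⁻¹ *ᵥ z) t3
    simp only [hYinv, Matrix.mulVec_add, Matrix.mulVec_smul] at t4
    rw [t4, ← Matrix.mulVec_mulVec, ← Matrix.mulVec_mulVec, ← hx, ← hx', hx,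
      Matrix.mulVec_mulVec (M := diagonal Rv), Matrix.diagonal_mul_diagonal]
  · have b2 : y' = -((Ψ * L) *ᵥ ((diagonal Imax)⁻¹ *ᵥ x)) -
        (Φ * L) *ᵥ ((diagonal Imax)⁻¹ *ᵥ (D⁻¹ *ᵥ (Y *ᵥ y - (1 + Y * diagonal Rv) *ᵥ x))) := by
      rw [← b]
      generalize 1 + Y * diagonal Rv = Q
      simp only [Matrix.mulVec_sub, Matrix.neg_mulVec, Matrix.mulVec_mulVec, Matrix.add_mulVec,
        Matrix.mul_assoc]
      abel
    rw [b2, t2, hx, hx', hIinv, hIinv, hΨ, hΦ]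
    simp only [Matrix.smul_mul, Matrix.one_mul, Matrix.smul_mulVec, Matrix.mulVec_add,
      Matrix.mulVec_smul, smul_add, smul_smul, neg_add, mul_comm rbar β]
    abel

/-- Sufficient condition c2) for semistability of the closed-loop matrix
`A_c` of the distributed cooperative droop control. -/
theorem closedLoop_semistable_c2
    (n : ℕ) (hn : 2 ≤ n)
    (Yc L : Matrix (Fin n) (Fin n) ℝ)
    (hYcsym : Yc.IsSymm) (hLsym : L.IsSymm)
    (hYcoff : ∀ i j, i ≠ j → Yc i j ≤ 0) (hLoff : ∀ i j, i ≠ j → L i j ≤ 0)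
    (hYcrow : ∀ i, ∑ j, Yc i j = 0) (hLrow : ∀ i, ∑ j, L i j = 0)
    (hYcrank : Yc.rank = n - 1) (hLrank : L.rank = n - 1)
    (G : Fin n → ℝ) (hG : ∀ i, 0 ≤ G i)
    (Ys : Matrix (Fin n) (Fin n) ℝ) (hYs : Ys = Matrix.diagonal G) (hYsne : Ys ≠ 0)
    (Y : Matrix (Fin n) (Fin n) ℝ) (hY : Y = Ys + Yc) (hYpd : Y.PosDef)
    (hYinvnn : ∀ i j, 0 ≤ Y⁻¹ i j)
    (Imax Rv : Fin n → ℝ) (hImax : ∀ i, 0 < Imax i) (hRv : ∀ i, 0 < Rv i)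
    (Υ R : Matrix (Fin n) (Fin n) ℝ)
    (hΥ : Υ = Matrix.diagonal Imax) (hR : R = Matrix.diagonal Rv)
    (τ rbar β ν₂ : ℝ) (hτ : 0 < τ) (hrbar : 0 < rbar) (hβ : 0 < β) (hν₂ : 0 < ν₂)
    (D Ψ Φ : Matrix (Fin n) (Fin n) ℝ)
    (hD : D = τ • (1 : Matrix (Fin n) (Fin n) ℝ))
    (hΨ : Ψ = β • (1 : Matrix (Fin n) (Fin n) ℝ))
    (hΦ : Φ = (rbar * β) • (1 : Matrix (Fin n) (Fin n) ℝ))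
    (hpsd : ((1 / 2 : ℝ) • (Y⁻¹ * Υ + Υ * Y⁻¹) + R * Υ
      - (ν₂ * β) • L).PosSemidef)
    (θ : ℝ) (hθ : IsAdmissible θ (Y⁻¹ * Υ))
    (hgain : (ν₂ + rbar) * θ ^ 2 + ν₂ + rbar > τ)
    (A_c : Matrix (Fin n ⊕ Fin n) (Fin n ⊕ Fin n) ℝ)
    (hA : A_c = Matrix.fromBlocks
      (-(D⁻¹ * (1 + Y * R))) (D⁻¹ * Y)
      (-(Ψ * L * Υ⁻¹) + Φ * L * Υ⁻¹ * D⁻¹ * (1 + Y * R)) (-(Φ * L * Υ⁻¹ * D⁻¹ * Y))) :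
    IsSemistable A_c := by
  subst hΥ hR
  have hdet : IsUnit Y.det := hYpd.det_pos.ne'.isUnit
  have key := aux_key Y L hdet Imax Rv hImax τ rbar β hτ A_c D Ψ Φ hD hΨ hΦ hA
  have hd : ∀ i, 0 < Rv i * Imax i := fun i => mul_pos (hRv i) (hImax i)
  have hL0 := aux_lap L hLsym hLoff hLrow
  have hYs : Yᵀ = Y := by
    have := hYpd.isHermitian
    rwa [Matrix.IsHermitian, Matrix.conjTranspose_eq_transpose_of_trivial] at this
  have hMT : diagonal Imax * Y⁻¹ = (Y⁻¹ * diagonal Imax)ᵀ := by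
    rw [Matrix.transpose_mul, Matrix.diagonal_transpose, Matrix.transpose_nonsing_inv, hYs]
  have hpsd' : ∀ x : Fin n → ℝ, ν₂ * β * (x ⬝ᵥ L *ᵥ x) ≤
      x ⬝ᵥ (Y⁻¹ * diagonal Imax) *ᵥ x + x ⬝ᵥ diagonal (fun i => Rv i * Imax i) *ᵥ x := by
    intro x
    have := hpsd.dotProduct_mulVec_nonneg x
    rw [hMT, Matrix.diagonal_mul_diagonal] at this
    simp only [star_trivial, Matrix.smul_mulVec, Matrix.add_mulVec, Matrix.sub_mulVec,
      dotProduct_add, dotProduct_sub, dotProduct_smul, aux_dot_transpose, smul_eq_mul] at this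
    linarith
  have hdec : ∀ z : Fin n ⊕ Fin n → ℝ, ∃ u y, z = Sum.elim (diagonal Imax *ᵥ u) y := by
    intro z
    refine ⟨fun i => z (Sum.inl i) / Imax i, z ∘ Sum.inr, ?_⟩
    ext i
    rcases i with i | i
    · simp [Matrix.mulVec_diagonal, mul_div_cancel₀ _ (hImax i).ne']
    · simp
  apply aux_real
  · intro σ ω a b ha hb hne hσ
    obtain ⟨u, yu, rfl⟩ := hdec a
    obtain ⟨v, yv, rfl⟩ := hdec b
    have ha' := key u (σ • u - ω • v) yu (σ • yu - ω • yv) (by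
      rw [ha]; ext i
      rcases i with i | i <;> simp [Matrix.mulVec_sub, Matrix.mulVec_smul])
    have hb' := key v (ω • u + σ • v) yv (ω • yu + σ • yv) (by
      rw [hb]; ext i
      rcases i with i | i <;> simp [Matrix.mulVec_add, Matrix.mulVec_smul])
    refine aux_core (Y⁻¹ * diagonal Imax) L (fun i => Rv i * Imax i) hd hLsym hL0
      τ rbar β ν₂ θ hτ hrbar hβ hν₂ hpsd' hθ hgain σ ω hσ u v yu yv ?_ ha'.1 hb'.1 ha'.2 hb'.2
    by_contra hc
    push Not at hc
    obtain ⟨rfl, rfl⟩ := hc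
    have h1 := ha'.1
    have h2 := hb'.1
    simp at h1 h2
    subst h1 h2
    rcases hne with h | h <;> apply h <;> ext i <;> rcases i with i | i <;> simp
  · intro z hz
    obtain ⟨w, y1, rfl⟩ := hdec z
    obtain ⟨u, y, hw⟩ := hdec (A_c *ᵥ Sum.elim (diagonal Imax *ᵥ w) y1)
    rw [hw] at hz ⊢
    have k1 := (key w u y1 y hw).2
    have k2 := key u 0 y 0 (by rw [hz]; ext i; rcases i with i | i <;> simp)
    obtain ⟨k2, k3⟩ := k2
    simp only [Matrix.mulVec_zero, smul_zero, zero_add, add_zero] at k2 k3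
    have hLu : L *ᵥ u = 0 := by
      have := neg_eq_zero.mp k3.symm
      exact (smul_eq_zero.mp this).resolve_left hβ.ne'
    have h0 : u ⬝ᵥ y = 0 := by
      rw [k1, dotProduct_neg, dotProduct_smul, aux_dot_symm L hLsym, hLu]
      simp
    rw [k2, dotProduct_add] at h0
    have hM : 0 ≤ u ⬝ᵥ (Y⁻¹ * diagonal Imax) *ᵥ u := by
      have := aux_adm _ θ hθ.2.1 u 0
      simpa using this
    have hu : u = 0 := by
      have hs : u ⬝ᵥ diagonal (fun i => Rv i * Imax i) *ᵥ u ≤ 0 := by linarith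
      simp only [dotProduct, Matrix.mulVec_diagonal] at hs
      have hnn : ∀ i ∈ Finset.univ, 0 ≤ u i * (Rv i * Imax i * u i) := fun i _ => by
        nlinarith [mul_nonneg (hd i).le (sq_nonneg (u i))]
      have hz := (Finset.sum_eq_zero_iff_of_nonneg hnn).mp (le_antisymm hs (Finset.sum_nonneg hnn))
      ext i
      have := hz i (Finset.mem_univ _)
      simpa [(hRv i).ne', (hImax i).ne'] using this
    subst hu
    simp at k2
    subst k2
    ext i; rcases i with i | i <;> simp
end

section
/- Let n ≥ 1, let Y be an invertible real n×n matrix, L a real symmetric n×n matrix with L·1ₙ = 0, and D, R, Υ, Φ, Ψ real diagonal matrices with D, Υ, Ψ invertible and R, Υ, Ψ having strictly positive diagonals. Suppose the closed-loop matrix A_c is semistable, rank(A_c) = 2n − 1, and v_lᵀ v_r ≠ 0, where v_r = (Υ·1ₙ, (Y⁻¹+R)Υ·1ₙ) and v_l = (Υ⁻¹LΦΨ⁻¹·1ₙ, Ψ⁻¹·1ₙ). Then for every initial state z₀ = (Iᵐ(0), Uᵈ(0)) ∈ ℝ^{2n}, lim_{t→∞} exp(t·A_c)·z₀ = r_{c1}·v_r,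 where r_{c1} = [1ₙᵀΨ⁻¹(Uᵈ(0) + ΦLΥ⁻¹Iᵐ(0))] / [1ₙᵀΨ⁻¹(Y⁻¹+R)Υ·1ₙ]. In particular the current vector converges to r_{c1}·Υ·1ₙ, i.e. every node attains the same steady current ratio r_{c1}. -/
open Matrix Filter Topology

section Helpers
attribute [local instance] Matrix.linftyOpNormedRing Matrix.linftyOpNormedAlgebra

theorem aux_hasDeriv {N : Type*} [Fintype N] [DecidableEq N] (A : Matrix N N ℝ) (x : N → ℝ)
    (t : ℝ) : HasDerivAt (fun t : ℝ => NormedSpace.exp (t • A) *ᵥ x)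
      ((A * NormedSpace.exp (t • A)) *ᵥ x) t := by
  have h := hasDerivAt_exp_smul_const' (𝕂 := ℝ) A t
  let f : Matrix N N ℝ →ₗ[ℝ] (N → ℝ) :=
    { toFun := fun M => M *ᵥ x
      map_add' := fun M M' => Matrix.add_mulVec M M' x
      map_smul' := fun c M => Matrix.smul_mulVec c M x }
  exact (LinearMap.toContinuousLinearMap f).hasFDerivAt.comp_hasDerivAt t h

theorem aux_exp_add {N : Type*} [Fintype N] [DecidableEq N] (A : Matrix N N ℝ) (s t : ℝ) :
    NormedSpace.exp ((s + t) • A) = NormedSpace.exp (s • A) * NormedSpace.exp (t • A) := by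
  rw [add_smul]
  exact Matrix.exp_add_of_commute _ _ (((Commute.refl A).smul_left s).smul_right t)

end Helpers

theorem aux_limit {N : Type*} [Fintype N] [DecidableEq N] (A : Matrix N N ℝ) (x y : N → ℝ)
    (h : Tendsto (fun t : ℝ => NormedSpace.exp (t • A) *ᵥ x) atTop (𝓝 y)) : A *ᵥ y = 0 := by
  have hfix : ∀ s : ℝ, NormedSpace.exp (s • A) *ᵥ y = y := by
    intro s
    have h1 : Tendsto (fun t : ℝ => NormedSpace.exp (s • A) *ᵥ (NormedSpace.exp (t • A) *ᵥ x))
        atTop (𝓝 (NormedSpace.exp (s • A) *ᵥ y)) :=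
      ((Continuous.matrix_mulVec continuous_const continuous_id).tendsto y).comp h
    have h2 := h.comp (tendsto_atTop_add_const_left atTop s tendsto_id)
    refine tendsto_nhds_unique h1 (h2.congr fun t => ?_)
    simp [aux_exp_add, Matrix.mulVec_mulVec]
  have hd := aux_hasDeriv A y 0
  simp only [hfix] at hd
  have := hd.unique (hasDerivAt_const (0 : ℝ) y)
  simpa using this

theorem aux_inv {N : Type*} [Fintype N] [DecidableEq N] (A : Matrix N N ℝ) (x v : N → ℝ)
    (hv : v ᵥ* A = 0) (t : ℝ) : v ⬝ᵥ (NormedSpace.exp (t • A) *ᵥ x) = v ⬝ᵥ x := by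
  have hd : ∀ t : ℝ, HasDerivAt (fun t : ℝ => v ⬝ᵥ (NormedSpace.exp (t • A) *ᵥ x)) 0 t := by
    intro t
    have h := aux_hasDeriv A x t
    have h2 := HasDerivAt.fun_sum (u := Finset.univ)
      fun i _ => ((hasDerivAt_pi.1 h i).const_mul (v i))
    have h3 : ∑ i, v i * ((A * NormedSpace.exp (t • A)) *ᵥ x) i = 0 := by
      change v ⬝ᵥ _ = 0
      rw [← Matrix.mulVec_mulVec, Matrix.dotProduct_mulVec, hv, zero_dotProduct]
    rw [h3] at h2
    exact h2
  have := is_const_of_deriv_eq_zero (fun t => (hd t).differentiableAt) (fun t => (hd t).deriv) t 0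
  simpa using this

theorem aux_main {N : Type*} [Fintype N] [DecidableEq N] (A : Matrix N N ℝ) (vl vr : N → ℝ)
    (hs : IsSemistable A) (hl : vl ᵥ* A = 0) (hr : A *ᵥ vr = 0) (hne : vl ⬝ᵥ vr ≠ 0)
    (hrank : A.rank + 1 = Fintype.card N) (x : N → ℝ) :
    Tendsto (fun t : ℝ => NormedSpace.exp (t • A) *ᵥ x) atTop
      (𝓝 (((vl ⬝ᵥ x) / (vl ⬝ᵥ vr)) • vr)) := by
  obtain ⟨y, hy⟩ := hs x
  have hAy := aux_limit A x y hy
  have hly : vl ⬝ᵥ y = vl ⬝ᵥ x := by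
    have h1 : Tendsto (fun t : ℝ => vl ⬝ᵥ (NormedSpace.exp (t • A) *ᵥ x)) atTop
        (𝓝 (vl ⬝ᵥ y)) :=
      ((Continuous.dotProduct continuous_const continuous_id).tendsto y).comp hy
    simp only [aux_inv A x vl hl] at h1
    exact tendsto_nhds_unique h1 tendsto_const_nhds |>.symm ▸ rfl
  have hker : Module.finrank ℝ (LinearMap.ker A.mulVecLin) = 1 := by
    have := LinearMap.finrank_range_add_finrank_ker A.mulVecLin
    rw [Module.finrank_fintype_fun_eq_card] at this
    unfold Matrix.rank at hrank
    omega
  have hvr0 : (⟨vr, by simpa using hr⟩ : LinearMap.ker A.mulVecLin) ≠ 0 := by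
    intro h
    have : vr = 0 := congrArg Subtype.val h
    simp [this] at hne
  obtain ⟨c, hc⟩ := (finrank_eq_one_iff_of_nonzero' _ hvr0).1 hker ⟨y, by simpa using hAy⟩
  have hc' : c • vr = y := congrArg Subtype.val hc
  have : (vl ⬝ᵥ x) / (vl ⬝ᵥ vr) = c := by
    rw [← hly, ← hc', dotProduct_smul, smul_eq_mul]
    field_simp
  rw [this, hc']
  exact hy

/-- For the semistable closed-loop matrix `A_c` with
`rank(A_c) = 2n − 1`, every trajectory converges to `r_{c1}·v_r`, where
`r_{c1} = 1ₙᵀΨ⁻¹(Uᵈ(0) + ΦLΥ⁻¹Iᵐ(0)) / 1ₙᵀΨ⁻¹(Y⁻¹+R)Υ1ₙ`; in particular the current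
vector converges to `r_{c1}·Υ1ₙ`, i.e. all nodes attain the same steady current ratio. -/
theorem closedLoop_steady_state_shunt
    (n : ℕ) (hn : 0 < n)
    (Y : Matrix (Fin n) (Fin n) ℝ) (hYunit : IsUnit Y.det)
    (L : Matrix (Fin n) (Fin n) ℝ) (hLsym : L.IsSymm)
    (hL1 : L *ᵥ (fun _ => (1 : ℝ)) = 0)
    (d r υ φv ψv : Fin n → ℝ)
    (hd : ∀ i, d i ≠ 0) (hr : ∀ i, 0 < r i) (hυ : ∀ i, 0 < υ i) (hψ : ∀ i, 0 < ψv i)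
    (D R Υ Φ Ψ : Matrix (Fin n) (Fin n) ℝ)
    (hD : D = Matrix.diagonal d) (hR : R = Matrix.diagonal r)
    (hΥ : Υ = Matrix.diagonal υ) (hΦ : Φ = Matrix.diagonal φv)
    (hΨ : Ψ = Matrix.diagonal ψv)
    (A_c : Matrix (Fin n ⊕ Fin n) (Fin n ⊕ Fin n) ℝ)
    (hA : A_c = Matrix.fromBlocks
      (-(D⁻¹ * (1 + Y * R))) (D⁻¹ * Y)
      (-(Ψ * L * Υ⁻¹) + Φ * L * Υ⁻¹ * D⁻¹ * (1 + Y * R)) (-(Φ * L * Υ⁻¹ * D⁻¹ * Y)))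
    (v_r v_l : Fin n ⊕ Fin n → ℝ)
    (hvr : v_r = Sum.elim (Υ *ᵥ (fun _ => (1 : ℝ)))
      (((Y⁻¹ + R) * Υ) *ᵥ (fun _ => (1 : ℝ))))
    (hvl : v_l = Sum.elim ((Υ⁻¹ * L * Φ * Ψ⁻¹) *ᵥ (fun _ => (1 : ℝ)))
      (Ψ⁻¹ *ᵥ (fun _ => (1 : ℝ))))
    (hsemi : IsSemistable A_c)
    (hrank : A_c.rank = 2 * n - 1)
    (hvlvr : v_l ⬝ᵥ v_r ≠ 0) :
    ∀ z₀ : Fin n ⊕ Fin n → ℝ,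
      Tendsto (fun t : ℝ => NormedSpace.exp (t • A_c) *ᵥ z₀) atTop
        (𝓝 ((((fun _ => (1 : ℝ)) ⬝ᵥ
              (Ψ⁻¹ *ᵥ ((fun i => z₀ (Sum.inr i)) +
                (Φ * L * Υ⁻¹) *ᵥ (fun i => z₀ (Sum.inl i))))) /
            ((fun _ => (1 : ℝ)) ⬝ᵥ
              (Ψ⁻¹ *ᵥ (((Y⁻¹ + R) * Υ) *ᵥ (fun _ => (1 : ℝ)))))) • v_r)) := by
  intro z₀
  have iD : D⁻¹ * D = 1 := Matrix.nonsing_inv_mul _ (by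
    rw [hD, Matrix.det_diagonal]; exact (Finset.prod_ne_zero_iff.2 fun i _ => hd i).isUnit)
  have uΥ : IsUnit Υ.det := by
    rw [hΥ, Matrix.det_diagonal]
    exact (Finset.prod_ne_zero_iff.2 fun i _ => (hυ i).ne').isUnit
  have uΨ : IsUnit Ψ.det := by
    rw [hΨ, Matrix.det_diagonal]
    exact (Finset.prod_ne_zero_iff.2 fun i _ => (hψ i).ne').isUnit
  have tΥ : Υᵀ = Υ := by rw [hΥ, Matrix.diagonal_transpose]
  have tΦ : Φᵀ = Φ := by rw [hΦ, Matrix.diagonal_transpose]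
  have tΨ : Ψᵀ = Ψ := by rw [hΨ, Matrix.diagonal_transpose]
  have tL : Lᵀ = L := hLsym
  set e : Fin n → ℝ := fun _ => (1 : ℝ) with he
  have hL1' : e ᵥ* L = 0 := by rw [← tL, Matrix.vecMul_transpose, hL1]
  have hvl' : v_l = Sum.elim (e ᵥ* (Ψ⁻¹ * (Φ * L * Υ⁻¹))) (e ᵥ* Ψ⁻¹) := by
    rw [hvl]
    congr 1
    · rw [← Matrix.vecMul_transpose]
      simp only [Matrix.transpose_mul, Matrix.transpose_nonsing_inv, tΥ, tΦ, tΨ, tL,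
        Matrix.mul_assoc]
    · rw [← Matrix.vecMul_transpose, Matrix.transpose_nonsing_inv, tΨ]
  have hl : v_l ᵥ* A_c = 0 := by
    rw [hvl', hA, Matrix.vecMul_fromBlocks]
    have h1 : Ψ⁻¹ * (Ψ * L * Υ⁻¹) = L * Υ⁻¹ := by
      rw [Matrix.mul_assoc, Matrix.nonsing_inv_mul_cancel_left _ _ uΨ]
    have h2 : e ᵥ* (L * Υ⁻¹) = 0 := by
      rw [← Matrix.vecMul_vecMul, hL1', Matrix.zero_vecMul]
    ext i
    rcases i with i | i
    · simp only [Function.comp_def, Sum.elim_inl, Sum.elim_inr, Pi.zero_apply,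
        Matrix.vecMul_vecMul, ← Matrix.vecMul_add, Matrix.mul_add (Ψ⁻¹), Matrix.mul_neg, h1]
      have : -(Ψ⁻¹ * (Φ * L * Υ⁻¹) * (D⁻¹ * (1 + Y * R))) +
          (-(L * Υ⁻¹) + Ψ⁻¹ * (Φ * L * Υ⁻¹ * D⁻¹ * (1 + Y * R))) = -(L * Υ⁻¹) := by
        simp only [Matrix.mul_assoc]; abel
      rw [this, Matrix.vecMul_neg, h2]; simp
    · simp only [Function.comp_def, Sum.elim_inl, Sum.elim_inr, Pi.zero_apply,
        Matrix.vecMul_vecMul, ← Matrix.vecMul_add, Matrix.mul_neg]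
      have : Ψ⁻¹ * (Φ * L * Υ⁻¹) * (D⁻¹ * Y) +
          -(Ψ⁻¹ * (Φ * L * Υ⁻¹ * D⁻¹ * Y)) = 0 := by
        simp only [Matrix.mul_assoc]; abel
      rw [this]; simp
  have hY : Y * (Y⁻¹ + R) = 1 + Y * R := by
    rw [Matrix.mul_add, Matrix.mul_nonsing_inv _ hYunit]
  have hΥΥ : Υ⁻¹ * Υ = 1 := Matrix.nonsing_inv_mul _ uΥ
  have hrr : A_c *ᵥ v_r = 0 := by
    rw [hvr, hA, Matrix.fromBlocks_mulVec]
    have k1 : -(D⁻¹ * (1 + Y * R)) * Υ + D⁻¹ * Y * ((Y⁻¹ + R) * Υ) = 0 := by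
      have : D⁻¹ * Y * ((Y⁻¹ + R) * Υ) = D⁻¹ * (Y * (Y⁻¹ + R)) * Υ := by
        simp only [Matrix.mul_assoc]
      rw [this, hY, Matrix.neg_mul]; abel
    have k2 : (-(Ψ * L * Υ⁻¹) + Φ * L * Υ⁻¹ * D⁻¹ * (1 + Y * R)) * Υ +
        -(Φ * L * Υ⁻¹ * D⁻¹ * Y) * ((Y⁻¹ + R) * Υ) = -(Ψ * L) := by
      have h1 : Φ * L * Υ⁻¹ * D⁻¹ * Y * ((Y⁻¹ + R) * Υ) =
          Φ * L * Υ⁻¹ * D⁻¹ * (Y * (Y⁻¹ + R)) * Υ := by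
        simp only [Matrix.mul_assoc]
      have h2 : Ψ * L * Υ⁻¹ * Υ = Ψ * L := by rw [Matrix.mul_assoc, hΥΥ, Matrix.mul_one]
      rw [Matrix.add_mul, Matrix.neg_mul, Matrix.neg_mul, h1, hY, h2]; abel
    ext i
    rcases i with i | i
    · simp only [Function.comp_def, Sum.elim_inl, Sum.elim_inr, Pi.zero_apply,
        Matrix.mulVec_mulVec, ← Matrix.add_mulVec]
      rw [k1]; simp
    · simp only [Function.comp_def, Sum.elim_inl, Sum.elim_inr, Pi.zero_apply,
        Matrix.mulVec_mulVec, ← Matrix.add_mulVec]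
      rw [k2, Matrix.neg_mulVec, ← Matrix.mulVec_mulVec, hL1]; simp
  have hnum : ∀ a b : Fin n → ℝ, v_l ⬝ᵥ (Sum.elim a b) =
      e ⬝ᵥ (Ψ⁻¹ *ᵥ (b + (Φ * L * Υ⁻¹) *ᵥ a)) := by
    intro a b
    rw [hvl', sumElim_dotProduct_sumElim, Matrix.mulVec_add, dotProduct_add,
      Matrix.mulVec_mulVec, Matrix.dotProduct_mulVec, Matrix.dotProduct_mulVec, add_comm]
  have hden : v_l ⬝ᵥ v_r = e ⬝ᵥ (Ψ⁻¹ *ᵥ (((Y⁻¹ + R) * Υ) *ᵥ e)) := by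
    rw [hvr, hnum, Matrix.mulVec_mulVec, Matrix.mul_assoc (Φ * L), hΥΥ, Matrix.mul_one,
      ← Matrix.mulVec_mulVec e Φ L, hL1, Matrix.mulVec_zero, add_zero]
  have hz : Sum.elim (fun i => z₀ (Sum.inl i)) (fun i => z₀ (Sum.inr i)) = z₀ := by
    ext i; rcases i with i | i <;> rfl
  have hfin := aux_main A_c v_l v_r hsemi hl hrr hvlvr (by
    rw [hrank, Fintype.card_sum, Fintype.card_fin]; omega) z₀
  rw [hden] at hfin
  rw [← hnum, hz]
  exact hfin
end

section
/- Let A be a real n×n matrix. Then A is semistable — i.e., for every x₀ ∈ ℝⁿ the limit as t → ∞ of exp(tA)·x₀ exists — if and only if A is Lyapunov stable (for every x₀ there exists ε > 0 such that ‖exp(tA)·x₀‖ < ε for all t ≥ 0) and A has no nonzero purely imaginary eigenvalue (every eigenvalue λ ∈ ℂ of A with Re λ = 0 satisfies λ = 0). -/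
open Matrix Filter Topology

/-- A real square matrix `A` is Lyapunov stable if every trajectory `exp(tA)x₀` is
bounded on `[0, ∞)`. -/
def IsLyapunovStable {N : Type*} [Fintype N] [DecidableEq N]
    (A : Matrix N N ℝ) : Prop :=
  ∀ x₀ : N → ℝ, ∃ ε : ℝ, 0 < ε ∧
    ∀ t : ℝ, 0 ≤ t → ‖NormedSpace.exp (t • A) *ᵥ x₀‖ < ε

open scoped Nat in
lemma exp_mulVec_of_pow_eq_zero {n : ℕ} (M : Matrix (Fin n) (Fin n) ℂ) (v : Fin n → ℂ) (k : ℕ)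
    (h : (M ^ k) *ᵥ v = 0) :
    NormedSpace.exp M *ᵥ v = ∑ j ∈ Finset.range k, ((j ! : ℂ)⁻¹) • ((M ^ j) *ᵥ v) := by
  let _ : NormedRing (Matrix (Fin n) (Fin n) ℂ) := Matrix.linftyOpNormedRing
  let _ : NormedAlgebra ℂ (Matrix (Fin n) (Fin n) ℂ) := Matrix.linftyOpNormedAlgebra
  have h1 : HasSum (fun j : ℕ => ((j ! : ℂ)⁻¹) • M ^ j) (NormedSpace.exp M) :=
    NormedSpace.exp_series_hasSum_exp' (𝕂 := ℂ) M
  let f : Matrix (Fin n) (Fin n) ℂ →+ (Fin n → ℂ) :=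
    { toFun := fun X => X *ᵥ v
      map_zero' := by simp
      map_add' := fun X Y => Matrix.add_mulVec X Y v }
  have hf : Continuous f := Continuous.matrix_mulVec continuous_id continuous_const
  have h2 := h1.map f hf
  refine h2.unique ?_
  have h3 : (f ∘ fun j : ℕ => ((j ! : ℂ)⁻¹) • M ^ j)
      = fun j : ℕ => ((j ! : ℂ)⁻¹) • ((M ^ j) *ᵥ v) := by
    funext j
    exact Matrix.smul_mulVec ((j ! : ℂ)⁻¹) (M ^ j) v
  rw [h3]
  apply hasSum_sum_of_ne_finset_zero
  intro j hj
  have hj' : k ≤ j := by simpa using hj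
  obtain ⟨m, rfl⟩ := Nat.exists_eq_add_of_le' hj'
  rw [pow_add, ← Matrix.mulVec_mulVec, h]
  simp

open scoped Nat in
lemma exp_gen {n : ℕ} (B : Matrix (Fin n) (Fin n) ℂ) (μ : ℂ) (v : Fin n → ℂ) (k : ℕ)
    (h : ((B - μ • 1) ^ k) *ᵥ v = 0) (t : ℝ) :
    NormedSpace.exp ((t : ℂ) • B) *ᵥ v = Complex.exp (t * μ) •
      ∑ j ∈ Finset.range k, ((j ! : ℂ)⁻¹ * (t : ℂ) ^ j) • (((B - μ • 1) ^ j) *ᵥ v) := by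
  have h1 : (t : ℂ) • B = ((t * μ : ℂ) • (1 : Matrix (Fin n) (Fin n) ℂ))
      + (t : ℂ) • (B - μ • 1) := by
    rw [smul_sub, smul_smul]; abel
  have h0 : NormedSpace.exp ((t * μ : ℂ) • (1 : Matrix (Fin n) (Fin n) ℂ))
      = Complex.exp (t * μ) • (1 : Matrix (Fin n) (Fin n) ℂ) := by
    rw [Matrix.smul_one_eq_diagonal, Matrix.smul_one_eq_diagonal, Matrix.exp_diagonal]
    congr 1
    funext i
    rw [Pi.coe_exp, Complex.exp_eq_exp_ℂ]
  rw [h1, Matrix.exp_add_of_commute _ _ ((Commute.one_left _).smul_left _), h0,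
    Matrix.smul_mul, one_mul, Matrix.smul_mulVec]
  congr 1
  rw [exp_mulVec_of_pow_eq_zero _ v k (by rw [smul_pow, Matrix.smul_mulVec, h, smul_zero])]
  refine Finset.sum_congr rfl fun j _ => ?_
  rw [smul_pow, Matrix.smul_mulVec, smul_smul]

lemma exp_eig {n : ℕ} (B : Matrix (Fin n) (Fin n) ℂ) (μ : ℂ) (v : Fin n → ℂ)
    (h : B *ᵥ v = μ • v) (t : ℝ) :
    NormedSpace.exp ((t : ℂ) • B) *ᵥ v = Complex.exp (t * μ) • v := by
  rw [exp_gen B μ v 1 (by simp [Matrix.sub_mulVec, h, Matrix.smul_mulVec]) t]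
  simp

/-- convergence on generalized eigenvectors with negative real part -/
lemma tendsto_gen {n : ℕ} (B : Matrix (Fin n) (Fin n) ℂ) (μ : ℂ) (hμ : μ.re < 0)
    (v : Fin n → ℂ) (k : ℕ) (h : ((B - μ • 1) ^ k) *ᵥ v = 0) :
    Tendsto (fun t : ℝ => NormedSpace.exp ((t : ℂ) • B) *ᵥ v) atTop (𝓝 0) := by
  simp_rw [exp_gen B μ v k h, Finset.smul_sum, smul_smul]
  rw [show (0 : Fin n → ℂ) = ∑ j ∈ Finset.range k, (0 : Fin n → ℂ) by simp]
  refine tendsto_finsetSum _ fun j _ => ?_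
  rw [show (0 : Fin n → ℂ) = (0 : ℂ) • (((B - μ • 1) ^ j) *ᵥ v) by simp]
  refine Tendsto.smul_const ?_ _
  have h1 : Tendsto (fun t : ℝ => Complex.exp (t * μ) * (t : ℂ) ^ j) atTop (𝓝 0) := by
    rw [tendsto_zero_iff_norm_tendsto_zero]
    have h2 := tendsto_rpow_mul_exp_neg_mul_atTop_nhds_zero j (-μ.re) (by linarith)
    refine h2.congr' ?_
    filter_upwards [eventually_ge_atTop 0] with t ht
    rw [norm_mul, Complex.norm_exp, norm_pow, Complex.norm_real, Real.norm_of_nonneg ht,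
      Real.rpow_natCast, mul_comm]
    congr 2
    simp [mul_comm]
  have h3 := h1.const_mul (((Nat.factorial j : ℕ) : ℂ)⁻¹)
  rw [mul_zero] at h3
  refine h3.congr fun t => ?_
  ring

/-- action of the real exponential on a complex vector -/
lemma exp_complex {n : ℕ} (A : Matrix (Fin n) (Fin n) ℝ) (t : ℝ) (v : Fin n → ℂ) (i : Fin n) :
    (NormedSpace.exp ((t : ℂ) • A.map Complex.ofReal) *ᵥ v) i =
      ((NormedSpace.exp (t • A) *ᵥ (fun j => (v j).re)) i : ℂ) +
      ((NormedSpace.exp (t • A) *ᵥ (fun j => (v j).im)) i : ℂ) * Complex.I := by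
  have h : NormedSpace.exp ((t : ℂ) • A.map Complex.ofReal)
      = (NormedSpace.exp (t • A)).map Complex.ofReal := by
    let _ : NormedRing (Matrix (Fin n) (Fin n) ℝ) := Matrix.linftyOpNormedRing
    let _ : NormedAlgebra ℝ (Matrix (Fin n) (Fin n) ℝ) := Matrix.linftyOpNormedAlgebra
    let _ : NormedAlgebra ℚ (Matrix (Fin n) (Fin n) ℝ) := NormedAlgebra.restrictScalars ℚ ℝ _
    let _ : NormedRing (Matrix (Fin n) (Fin n) ℂ) := Matrix.linftyOpNormedRing
    let _ : NormedAlgebra ℂ (Matrix (Fin n) (Fin n) ℂ) := Matrix.linftyOpNormedAlgebra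
    have h1 := NormedSpace.map_exp (Complex.ofRealHom.mapMatrix (m := Fin n))
      (Continuous.matrix_map continuous_id Complex.continuous_ofReal) (t • A)
    have h2 : (Complex.ofRealHom.mapMatrix (m := Fin n)) (t • A)
        = (t : ℂ) • A.map Complex.ofReal := by
      ext i j; simp
    rw [h2] at h1
    exact h1.symm
  rw [h]
  simp only [Matrix.mulVec, dotProduct, Matrix.map_apply, Complex.ofReal_sum, Finset.sum_mul,
    ← Finset.sum_add_distrib, Complex.ofReal_mul]
  refine Finset.sum_congr rfl fun j _ => ?_
  conv_lhs => rw [← Complex.re_add_im (v j)]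
  ring

lemma forward_bdd {n : ℕ} (A : Matrix (Fin n) (Fin n) ℝ) (h : IsSemistable A) :
    IsLyapunovStable A := by
  intro x
  obtain ⟨y, hy⟩ := h x
  have hc : Continuous fun t : ℝ => NormedSpace.exp (t • A) *ᵥ x := by
    let _ : NormedRing (Matrix (Fin n) (Fin n) ℝ) := Matrix.linftyOpNormedRing
    let _ : NormedAlgebra ℝ (Matrix (Fin n) (Fin n) ℝ) := Matrix.linftyOpNormedAlgebra
    let _ : NormedAlgebra ℚ (Matrix (Fin n) (Fin n) ℝ) := NormedAlgebra.restrictScalars ℚ ℝ _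
    have h1 : Continuous fun t : ℝ => NormedSpace.exp (t • A) :=
      NormedSpace.exp_continuous.comp (continuous_id.smul continuous_const)
    exact h1.matrix_mulVec continuous_const
  have h1 : ∀ᶠ t in atTop, ‖NormedSpace.exp (t • A) *ᵥ x‖ < ‖y‖ + 1 :=
    hy.norm.eventually (gt_mem_nhds (by linarith))
  obtain ⟨T, hT⟩ := eventually_atTop.1 h1
  obtain ⟨C, hC⟩ := (isCompact_Icc (a := (0 : ℝ)) (b := T)).exists_bound_of_continuousOn
    hc.continuousOn
  refine ⟨max (‖y‖ + 1) (C + 1), lt_of_lt_of_le (by positivity) (le_max_left _ _), ?_⟩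
  intro t ht
  rcases le_total T t with hh | hh
  · exact lt_of_lt_of_le (hT t hh) (le_max_left _ _)
  · exact lt_of_lt_of_le (lt_of_le_of_lt (hC t ⟨ht, hh⟩) (lt_add_one C)) (le_max_right _ _)

lemma forward_eig {n : ℕ} (A : Matrix (Fin n) (Fin n) ℝ) (h : IsSemistable A)
    (lam : ℂ) (v : Fin n → ℂ) (hv : v ≠ 0) (he : (A.map Complex.ofReal) *ᵥ v = lam • v)
    (hre : lam.re = 0) : lam = 0 := by
  obtain ⟨i, hi⟩ := Function.ne_iff.1 hv
  obtain ⟨y, hy⟩ := h (fun j => (v j).re)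
  obtain ⟨z, hz⟩ := h (fun j => (v j).im)
  have hy' := (Complex.continuous_ofReal.tendsto _).comp (tendsto_pi_nhds.1 hy i)
  have hz' := (Complex.continuous_ofReal.tendsto _).comp (tendsto_pi_nhds.1 hz i)
  have h1 : Tendsto (fun t : ℝ => Complex.exp (t * lam)) atTop
      (𝓝 (((y i : ℂ) + (z i : ℂ) * Complex.I) * (v i)⁻¹)) := by
    refine ((hy'.add (hz'.mul_const Complex.I)).mul_const (v i)⁻¹).congr fun t => ?_
    have h2 := exp_complex A t v i
    rw [exp_eig _ lam v he t] at h2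
    simp only [Function.comp_apply]
    rw [← h2, Pi.smul_apply, smul_eq_mul, mul_assoc, mul_inv_cancel₀ hi, mul_one]
  set L := ((y i : ℂ) + (z i : ℂ) * Complex.I) * (v i)⁻¹
  have hlam : lam = lam.im * Complex.I := by
    apply Complex.ext <;> simp [hre]
  have hL : ‖L‖ = 1 := by
    refine tendsto_nhds_unique h1.norm ?_
    refine tendsto_const_nhds.congr fun t => ?_
    rw [Complex.norm_exp]
    simp [hre]
  by_contra hne
  have him : lam.im ≠ 0 := by
    intro h0; apply hne; rw [hlam, h0]; simp
  have h3 : Tendsto (fun t : ℝ => Complex.exp (((t + Real.pi / lam.im : ℝ) : ℂ) * lam)) atTop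
      (𝓝 L) := h1.comp (tendsto_atTop_add_const_right _ _ tendsto_id)
  have h4 : Tendsto (fun t : ℝ => - Complex.exp (t * lam)) atTop (𝓝 L) := by
    refine h3.congr fun t => ?_
    have h5 : (((t + Real.pi / lam.im : ℝ) : ℂ) * lam) = t * lam + Real.pi * Complex.I := by
      have him' : (lam.im : ℂ) ≠ 0 := by exact_mod_cast him
      push_cast
      rw [add_mul]
      congr 1
      conv_lhs => rw [hlam]
      simp
      field_simp
    rw [h5, Complex.exp_add, Complex.exp_pi_mul_I]
    ring
  have h6 : L = -L := tendsto_nhds_unique h4 h1.neg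
  have h7 : L = 0 := self_eq_neg.1 h6
  rw [h7] at hL
  simp at hL

lemma bdd_complex {n : ℕ} (A : Matrix (Fin n) (Fin n) ℝ) (h : IsLyapunovStable A)
    (v : Fin n → ℂ) (i : Fin n) : ∃ C : ℝ, ∀ t : ℝ, 0 ≤ t →
      ‖(NormedSpace.exp ((t : ℂ) • A.map Complex.ofReal) *ᵥ v) i‖ ≤ C := by
  obtain ⟨C, _, hC⟩ := h (fun j => (v j).re)
  obtain ⟨D, _, hD⟩ := h (fun j => (v j).im)
  refine ⟨C + D, fun t ht => ?_⟩
  rw [exp_complex]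
  refine (norm_add_le _ _).trans (add_le_add ?_ ?_)
  · rw [Complex.norm_real]
    exact (norm_le_pi_norm _ i).trans (hC t ht).le
  · rw [norm_mul, Complex.norm_I, mul_one, Complex.norm_real]
    exact (norm_le_pi_norm _ i).trans (hD t ht).le

lemma pow_kernel {n : ℕ} (M : Matrix (Fin n) (Fin n) ℂ)
    (h : ∀ w, M *ᵥ w = 0 → w = 0) (k : ℕ) (v : Fin n → ℂ) (hk : (M ^ k) *ᵥ v = 0) : v = 0 := by
  induction k with
  | zero => simpa using hk
  | succ k ih =>
    apply ih
    apply h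
    rw [Matrix.mulVec_mulVec, ← pow_succ']
    exact hk

lemma pow_kernel' {n : ℕ} (M : Matrix (Fin n) (Fin n) ℂ)
    (h : ∀ w, M *ᵥ (M *ᵥ w) = 0 → M *ᵥ w = 0) (k : ℕ) (v : Fin n → ℂ)
    (hk : (M ^ k) *ᵥ v = 0) : M *ᵥ v = 0 := by
  induction k with
  | zero =>
    have : v = 0 := by simpa using hk
    rw [this, Matrix.mulVec_zero]
  | succ k ih =>
    rcases Nat.eq_zero_or_pos k with rfl | hpos
    · simpa using hk
    · apply ih
      obtain ⟨m, rfl⟩ := Nat.exists_eq_add_of_le' hpos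
      rw [pow_succ', ← Matrix.mulVec_mulVec]
      apply h
      rw [Matrix.mulVec_mulVec, Matrix.mulVec_mulVec, mul_assoc, ← pow_succ',
        ← pow_succ']
      exact hk

lemma backward_gen {n : ℕ} (A : Matrix (Fin n) (Fin n) ℝ) (h : IsLyapunovStable A)
    (hi : ∀ lam : ℂ, (∃ v : Fin n → ℂ, v ≠ 0 ∧
            (A.map (Complex.ofReal)) *ᵥ v = lam • v) → lam.re = 0 → lam = 0)
    (μ : ℂ) (k : ℕ) (v : Fin n → ℂ)
    (hv : ((A.map Complex.ofReal - μ • 1) ^ k) *ᵥ v = 0) :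
    ∃ y, Tendsto (fun t : ℝ => NormedSpace.exp ((t : ℂ) • A.map Complex.ofReal) *ᵥ v)
      atTop (𝓝 y) := by
  have hker : ∀ w : Fin n → ℂ, (A.map Complex.ofReal - μ • 1) *ᵥ w = 0 →
      A.map Complex.ofReal *ᵥ w = μ • w := by
    intro w hw
    rw [Matrix.sub_mulVec, Matrix.smul_mulVec, Matrix.one_mulVec, sub_eq_zero] at hw
    exact hw
  have hzero : (∀ w : Fin n → ℂ, (A.map Complex.ofReal - μ • 1) *ᵥ w = 0 → w = 0) →
      ∃ y, Tendsto (fun t : ℝ => NormedSpace.exp ((t : ℂ) • A.map Complex.ofReal) *ᵥ v)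
      atTop (𝓝 y) := by
    intro hw
    rw [pow_kernel _ hw k v hv]
    exact ⟨0, by simp⟩
  rcases lt_trichotomy μ.re 0 with hμ | hμ | hμ
  · exact ⟨0, tendsto_gen _ μ hμ v k hv⟩
  · by_cases h0 : μ = 0
    · subst h0
      rw [zero_smul, sub_zero] at hv
      have hB : A.map Complex.ofReal *ᵥ v = 0 := by
        refine pow_kernel' _ ?_ k v hv
        intro w hw
        by_contra hne
        obtain ⟨i, hi'⟩ := Function.ne_iff.1 hne
        obtain ⟨C, hC⟩ := bdd_complex A h w i
        have h2 : ∀ t : ℝ, (NormedSpace.exp ((t : ℂ) • A.map Complex.ofReal) *ᵥ w) i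
            = w i + t * (A.map Complex.ofReal *ᵥ w) i := by
          intro t
          rw [exp_gen _ 0 w 2 (by
            rw [zero_smul, sub_zero, pow_two, ← Matrix.mulVec_mulVec]; exact hw) t]
          simp [Finset.sum_range_succ]
        have h3 : 0 < ‖(A.map Complex.ofReal *ᵥ w) i‖ := norm_pos_iff.2 hi'
        have h5 : 0 ≤ C := (norm_nonneg _).trans (hC 0 le_rfl)
        have h4 := hC ((C + ‖w i‖ + 1) / ‖(A.map Complex.ofReal *ᵥ w) i‖) (by positivity)
        rw [h2] at h4
        have h6 := norm_sub_le_norm_add (((((C + ‖w i‖ + 1) / ‖(A.map Complex.ofReal *ᵥ w) i‖ : ℝ)) : ℂ)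
          * (A.map Complex.ofReal *ᵥ w) i) (w i)
        rw [add_comm] at h4
        rw [norm_mul, Complex.norm_real, Real.norm_of_nonneg (by positivity),
          div_mul_cancel₀ _ h3.ne'] at h6
        linarith
      refine ⟨v, tendsto_const_nhds.congr fun t => ?_⟩
      rw [exp_eig _ 0 v (by rw [hB, zero_smul]) t]
      simp
    · apply hzero
      intro w hw
      by_contra hne
      exact h0 (hi μ ⟨w, hne, hker w hw⟩ hμ)
  · apply hzero
    intro w hw
    by_contra hne
    obtain ⟨i, hi'⟩ := Function.ne_iff.1 hne
    obtain ⟨C, hC⟩ := bdd_complex A h w i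
    have h3 : 0 < ‖w i‖ := norm_pos_iff.2 hi'
    have h5 : 0 ≤ C := (norm_nonneg _).trans (hC 0 le_rfl)
    have h4 := hC (C / ‖w i‖ / μ.re) (by positivity)
    rw [exp_eig _ μ w (hker w hw), Pi.smul_apply, norm_smul, Complex.norm_exp,
      Complex.re_ofReal_mul, div_mul_cancel₀ _ hμ.ne'] at h4
    have h6 := Real.add_one_le_exp (C / ‖w i‖)
    have h7 := mul_le_mul_of_nonneg_right h6 h3.le
    rw [add_mul, div_mul_cancel₀ _ h3.ne'] at h7
    linarith

lemma backward {n : ℕ} (A : Matrix (Fin n) (Fin n) ℝ) (h : IsLyapunovStable A)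
    (hi : ∀ lam : ℂ, (∃ v : Fin n → ℂ, v ≠ 0 ∧
            (A.map (Complex.ofReal)) *ᵥ v = lam • v) → lam.re = 0 → lam = 0) :
    IsSemistable A := by
  have key : ∀ v : Fin n → ℂ, ∃ y,
      Tendsto (fun t : ℝ => NormedSpace.exp ((t : ℂ) • A.map Complex.ofReal) *ᵥ v)
      atTop (𝓝 y) := by
    intro v
    have hv : v ∈ ⨆ μ : ℂ,
        Module.End.maxGenEigenspace (Matrix.toLin' (A.map Complex.ofReal)) μ := by
      rw [Module.End.iSup_maxGenEigenspace_eq_top]; trivial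
    refine Submodule.iSup_induction _ (motive := fun v => ∃ y,
      Tendsto (fun t : ℝ => NormedSpace.exp ((t : ℂ) • A.map Complex.ofReal) *ᵥ v)
      atTop (𝓝 y)) hv ?_ ?_ ?_
    · intro μ x hx
      rw [Module.End.mem_maxGenEigenspace] at hx
      obtain ⟨k, hk⟩ := hx
      apply backward_gen A h hi μ k x
      rw [← hk, ← Matrix.toLin'_apply, Matrix.toLin'_pow, map_sub, map_smul, Matrix.toLin'_one]
      rfl
    · exact ⟨0, by simp⟩
    · intro x y hx hy
      obtain ⟨a, ha⟩ := hx
      obtain ⟨b, hb⟩ := hy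
      exact ⟨a + b, by simpa only [Matrix.mulVec_add] using ha.add hb⟩
  intro x
  obtain ⟨y, hy⟩ := key (fun j => (x j : ℂ))
  refine ⟨fun i => (y i).re, tendsto_pi_nhds.2 fun i => ?_⟩
  refine ((Complex.continuous_re.tendsto _).comp (tendsto_pi_nhds.1 hy i)).congr fun t => ?_
  simp only [Function.comp_apply]
  rw [exp_complex]
  simp

/-- A real square matrix is semistable iff it is Lyapunov stable and
has no nonzero purely imaginary eigenvalue. -/
theorem semistable_iff_lyapunov_and_no_imaginary_eigenvalue
    (n : ℕ) (A : Matrix (Fin n) (Fin n) ℝ) :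
    IsSemistable A ↔
      (IsLyapunovStable A ∧
        ∀ lam : ℂ, (∃ v : Fin n → ℂ, v ≠ 0 ∧
            (A.map (Complex.ofReal)) *ᵥ v = lam • v) → lam.re = 0 → lam = 0) := by
  constructor
  · intro h
    exact ⟨forward_bdd A h, fun lam ⟨v, hv, he⟩ hre => forward_eig A h lam v hv he hre⟩
  · rintro ⟨h, hi⟩
    exact backward A h hi
end
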